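/- Fix a ∈ ℤ with a ≥ −1, and let b = max{a+4, |a|+1}. Assume θ ∈ Ḣ^b_⋄ and f ∈ Ḣ^{b−1}_⋄. Then the operator Δ 𝕀_θ* 𝕀_θ is a homeomorphism of Ḣ^a_⋄; equivalently, the information operator 𝕀_θ* 𝕀_θ is a homeomorphism between Ḣ^a_⋄ and Ḣ^{a+2}_⋄ (it is injective, surjective, and continuous with continuous inverse). -/

import Mathlib

open MeasureTheory Set
open scoped BigOperators

noncomputable section

namespace NS2D

/-- Nonzero Fourier frequencies of the 2D torus `Ω = 𝕋²`. -/
def Freq : Type := {k : ℤ × ℤ // k ≠ 0}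

/-- Squared Euclidean modulus `|k|²` of a frequency. -/
def knormSq (k : Freq) : ℝ := (k.1.1 : ℝ) ^ 2 + (k.1.2 : ℝ) ^ 2

/-- Eigenvalue `λ_k = 4π²|k|²` of the periodic Laplacian `−Δ`. -/
def lam (k : Freq) : ℝ := 4 * Real.pi ^ 2 * knormSq k

/-- A divergence-free mean-zero vector field `u ∈ Ḣ_⋄` (or, more generally, an
element of the scale `Ḣ^α_⋄`) on the torus is represented by its Fourier
coefficients `c k` along the orthonormal basis
`e_k(x) = |k|⁻¹ (k₂, −k₁) exp(2πi k·x)` of divergence-free fields. -/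
abbrev Coef : Type := Freq → ℂ

/-- Negation of a frequency. -/
def fneg (k : Freq) : Freq := ⟨-k.1, neg_ne_zero.mpr k.2⟩

/-- The conjugacy condition expressing that the coefficients `c` represent a
real-valued vector field (note `e_{−k} = − conj e_k`). -/
def IsReal (c : Coef) : Prop := ∀ k, c (fneg k) = - (starRingEnd ℂ) (c k)

/-- Squared homogeneous Sobolev norm `‖·‖²_{Ḣ^α} = Σ_k λ_k^α |c k|²`. -/
def hSq (α : ℝ) (c : Coef) : ℝ := ∑' k, lam k ^ α * ‖c k‖ ^ 2

/-- Homogeneous Sobolev norm `‖·‖_{Ḣ^α}`. -/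
def hN (α : ℝ) (c : Coef) : ℝ := Real.sqrt (hSq α c)

/-- Finiteness of the `Ḣ^α`-norm. -/
def FinH (α : ℝ) (c : Coef) : Prop := Summable fun k => lam k ^ α * ‖c k‖ ^ 2

/-- Membership in `Ḣ^α_⋄` (real-valued field with finite `Ḣ^α`-norm). -/
def MemH (α : ℝ) (c : Coef) : Prop := IsReal c ∧ FinH α c

/-- Membership in `Ḣ^∞_⋄ = C^∞(Ω)² ∩ Ḣ_⋄`: all Sobolev norms are finite. -/
def MemHinf (c : Coef) : Prop := ∀ α : ℝ, MemH α c

/-- Real `Ḣ^α` inner product `⟨·,·⟩_{Ḣ^α}` (for real-valued fields). -/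
def hInner (α : ℝ) (c d : Coef) : ℝ := ∑' k, lam k ^ α * (c k * (starRingEnd ℂ) (d k)).re

/-- The `L²` inner product. -/
def innerC (c d : Coef) : ℂ := ∑' k, c k * (starRingEnd ℂ) (d k)

/-- The unit vector `(k₂, −k₁)/|k|` spanning the divergence-free direction at
frequency `k`. -/
def evec (k : Freq) : ℝ × ℝ :=
  ((k.1.2 : ℝ) / Real.sqrt (knormSq k), -((k.1.1 : ℝ)) / Real.sqrt (knormSq k))

/-- Euclidean dot product on `ℝ²`. -/
def dotR (a b : ℝ × ℝ) : ℝ := a.1 * b.1 + a.2 * b.2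

/-- A frequency as a real vector. -/
def fvec (k : Freq) : ℝ × ℝ := ((k.1.1 : ℝ), (k.1.2 : ℝ))

/-- Fourier coefficients (along the basis `e_k`) of the Leray-projected
transport nonlinearity `B[u,v] = P[(u·∇)v]`:
`(B[u,v])^(k) · ē_k = 2πi Σ_{m+n=k, n≠0} c_m d_n (e_m·n)(e_n·e_k)`. -/
def Bc (c d : Coef) : Coef := fun k =>
  (((2 * Real.pi : ℝ) : ℂ) * Complex.I) *
    ∑' m : Freq,
      if h : k.1 - m.1 ≠ 0 then
        c m * d ⟨k.1 - m.1, h⟩ *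
          (((dotR (evec m) (fvec ⟨k.1 - m.1, h⟩) *
            dotR (evec ⟨k.1 - m.1, h⟩) (evec k) : ℝ)) : ℂ)
      else 0

/-- The Laplacian `Δ` acting on the scale: `(Δu)^(k) = −λ_k û(k)`. -/
def lapC (c : Coef) : Coef := fun k => -((lam k : ℝ) : ℂ) * c k

/-- Continuity of a trajectory `t ↦ u(t)`, `t ∈ [0,T]`, for the `Ḣ^α`-norm:
`u ∈ C([0,T], Ḣ^α_⋄)`. -/
def ContH (α : ℝ) (T : ℝ) (u : ℝ → Coef) : Prop :=
  ∀ t ∈ Icc (0:ℝ) T, ∀ ε > 0, ∃ δ > 0, ∀ s ∈ Icc (0:ℝ) T,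
    |s - t| < δ → hN α (u s - u t) < ε

/-- Membership `u ∈ L²([0,T], Ḣ^α_⋄)`. -/
def MemL2H (α : ℝ) (T : ℝ) (u : ℝ → Coef) : Prop :=
  (∀ t ∈ Ioc (0:ℝ) T, MemH α (u t)) ∧
    IntegrableOn (fun t => hSq α (u t)) (Ioc 0 T)

/-- `u` is a strong solution on `[0,T]` of the (Leray-projected) periodic 2D
Navier–Stokes equations `du/dt + νAu + B[u,u] = f`, `u(0) = θ`, posed in `Ḣ_⋄`:
the Fourier coefficients satisfy the corresponding system of ODEs on `(0,T]`,
the trajectory is continuous into `Ḣ¹_⋄` (in particular at `t = 0`), and lies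
in `L²([0,T], Ḣ²_⋄)`. -/
structure IsNSSol (ν : ℝ) (f : Coef) (T : ℝ) (θ : Coef) (u : ℝ → Coef) : Prop where
  init : u 0 = θ
  real : ∀ t ∈ Icc (0:ℝ) T, IsReal (u t)
  deriv : ∀ (k : Freq), ∀ t ∈ Ioc (0:ℝ) T,
    HasDerivAt (fun s => u s k)
      (f k - ((ν * lam k : ℝ) : ℂ) * u t k - Bc (u t) (u t) k) t
  contH1 : ContH 1 T u
  memL2H2 : MemL2H 2 T u

/-- `U` solves the linear parabolic equation
`dU/dt − νΔU + B[u₀, U] + B[U, u₁] = g`, `U(0) = ξ`, on `[0,T]`. -/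
structure IsLinPSol (ν : ℝ) (u₀ u₁ : ℝ → Coef) (g : ℝ → Coef) (T : ℝ) (ξ : Coef)
    (U : ℝ → Coef) : Prop where
  init : U 0 = ξ
  real : ∀ t ∈ Icc (0:ℝ) T, IsReal (U t)
  deriv : ∀ (k : Freq), ∀ t ∈ Ioc (0:ℝ) T,
    HasDerivAt (fun s => U s k)
      (g t k - ((ν * lam k : ℝ) : ℂ) * U t k - Bc (u₀ t) (U t) k - Bc (U t) (u₁ t) k) t

/-- `U = 𝕀_θ[ξ]` solves the linearisation of Navier–Stokes along the
trajectory `u₀`: `dU/dt − νΔU + B[u₀,U] + B[U,u₀] = 0`, `U(0) = ξ`. -/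
def IsLinSol (ν : ℝ) (u₀ : ℝ → Coef) (T : ℝ) (ξ : Coef) (U : ℝ → Coef) : Prop :=
  IsLinPSol ν u₀ u₀ (fun _ => 0) T ξ U

/-- The heat semigroup `S_t = e^{νtΔ}` on the scale `Ḣ^α_⋄`. -/
def heatS (ν t : ℝ) (c : Coef) : Coef := fun k =>
  ((Real.exp (-(ν * lam k * t)) : ℝ) : ℂ) * c k

/-- Duhamel representation of the solution of the periodic heat equation
`du/dt − νΔu = g`, `u(0) = h`. -/
def heatSol (ν : ℝ) (g : ℝ → Coef) (h : Coef) : ℝ → Coef := fun t k =>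
  ((Real.exp (-(ν * lam k * t)) : ℝ) : ℂ) *
    (h k + ∫ s in (0:ℝ)..t, ((Real.exp (ν * lam k * s) : ℝ) : ℂ) * g s k)

/-- Real-linearity of a map on the coefficient space. -/
def IsLinMap (Λ : Coef → Coef) : Prop :=
  (∀ c d, Λ (c + d) = Λ c + Λ d) ∧ ∀ (r : ℝ) (c : Coef), Λ (r • c) = r • Λ c

/-- `Λ` defines a compact (linear) operator `Ḣ^α_⋄ → Ḣ^β_⋄`: it is linear,
maps `Ḣ^α_⋄` into `Ḣ^β_⋄`, and the image of the `Ḣ^α`-unit ball is totally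
bounded for the `Ḣ^β`-norm. -/
def IsCompactOp (α β : ℝ) (Λ : Coef → Coef) : Prop :=
  IsLinMap Λ ∧ (∀ c, MemH α c → MemH β (Λ c)) ∧
    ∀ ε > 0, ∃ S : Finset Coef, ∀ c, MemH α c → hN α c ≤ 1 →
      ∃ s ∈ S, hN β (Λ c - s) < ε

/-- The index `a* = |a|+1` if `|a| ≤ 1`, `a* = |a|` if `|a| ≥ 2`. -/
def astar (a : ℤ) : ℤ := if |a| ≤ 1 then |a| + 1 else |a|

/-- `i`-th component of the unit vector `evec k`. -/
def evecC (i : Fin 2) (k : Freq) : ℝ := if i = 0 then (evec k).1 else (evec k).2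

/-- Fourier coefficients (over all of `ℤ²`) of the scalar component `u_i` of a
divergence-free field with coefficients `c`. -/
def compCoef (i : Fin 2) (c : Coef) : ℤ × ℤ → ℂ := fun n =>
  if h : n ≠ 0 then c ⟨n, h⟩ * ((evecC i ⟨n, h⟩ : ℝ) : ℂ) else 0

/-- Convolution: Fourier coefficients of a pointwise product of two scalar
functions. -/
def convC (F G : ℤ × ℤ → ℂ) : ℤ × ℤ → ℂ := fun n => ∑' m : ℤ × ℤ, F m * G (n - m)

/-- Squared homogeneous Sobolev norm of a scalar function given by its Fourier
coefficients over `ℤ²`. -/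
def hSqScalar (α : ℝ) (F : ℤ × ℤ → ℂ) : ℝ := ∑' k : Freq, lam k ^ α * ‖F k.1‖ ^ 2

/-- `‖u vᵀ‖²_{Ḣ^α} = Σ_{i,j=1}^2 ‖u_i v_j‖²_{Ḣ^α}`. -/
def hSqMat (α : ℝ) (c d : Coef) : ℝ :=
  ∑ i : Fin 2, ∑ j : Fin 2, hSqScalar α (convC (compCoef i c) (compCoef j d))

/-- The character `exp(2πi k·x)`. -/
def efun (k : Freq) (x : ℝ × ℝ) : ℂ :=
  Complex.exp ((((2 * Real.pi : ℝ)) : ℂ) * Complex.I *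
    ((k.1.1 : ℂ) * (x.1 : ℂ) + (k.1.2 : ℂ) * (x.2 : ℂ)))

/-- Pointwise evaluation of the `i`-th component of the field. -/
def evalComp (i : Fin 2) (c : Coef) (x : ℝ × ℝ) : ℂ :=
  ∑' k, c k * ((evecC i k : ℝ) : ℂ) * efun k x

/-- Supremum norm (`C⁰`-norm) of the field. -/
def c0N (c : Coef) : ℝ := ⨆ x : ℝ × ℝ, max ‖evalComp 0 c x‖ ‖evalComp 1 c x‖

/-- The partial derivative `∂_j` acting on divergence-free fields. -/
def pderiv (j : Fin 2) (c : Coef) : Coef := fun k =>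
  (((2 * Real.pi : ℝ) : ℂ) * Complex.I) *
    (if j = 0 then ((k.1.1 : ℤ) : ℂ) else ((k.1.2 : ℤ) : ℂ)) * c k

/-- `C¹`-norm of the field. -/
def c1N (c : Coef) : ℝ := c0N c + c0N (pderiv 0 c) + c0N (pderiv 1 c)

/-- Norm of the multiplier space `B^ℓ`: `C^ℓ(Ω)²` for `ℓ ≤ 1` and `Ḣ^ℓ` for
`ℓ ≥ 2`. -/
def bN (ℓ : ℕ) (c : Coef) : ℝ :=
  if ℓ = 0 then c0N c else if ℓ = 1 then c1N c else hN (ℓ : ℝ) c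

end NS2D

namespace NS2D
open scoped ENNReal

instance instCountableFreq : Countable Freq :=
  inferInstanceAs (Countable {k : ℤ × ℤ // k ≠ 0})

lemma knormSq_ge_one (k : Freq) : 1 ≤ knormSq k := by
  obtain ⟨⟨x, y⟩, hk⟩ := k
  have h : (1 : ℤ) ≤ x ^ 2 + y ^ 2 := by
    by_contra hlt
    have hx : x ^ 2 ≥ 0 := sq_nonneg x
    have hy : y ^ 2 ≥ 0 := sq_nonneg y
    have hx0 : x ^ 2 = 0 := by omega
    have hy0 : y ^ 2 = 0 := by omega
    exact hk (by simp [pow_eq_zero_iff] at hx0 hy0; simp [hx0, hy0])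
  simp only [knormSq]
  exact_mod_cast h

lemma four_pi_sq_ge : (4 : ℝ) ≤ 4 * Real.pi ^ 2 := by
  nlinarith [Real.pi_gt_three]

lemma lam_ge_four (k : Freq) : 4 ≤ lam k := by
  have h1 := knormSq_ge_one k
  have h2 := four_pi_sq_ge
  unfold lam
  nlinarith

lemma lam_ge_one (k : Freq) : 1 ≤ lam k := by linarith [lam_ge_four k]
lemma lam_pos (k : Freq) : 0 < lam k := by linarith [lam_ge_four k]

/-- the weight `λ_k^p` in `[0,∞]`. -/
def wt (p : ℝ) (k : Freq) : ℝ≥0∞ := ENNReal.ofReal (lam k ^ p)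

lemma wt_mul (p q : ℝ) (k : Freq) : wt p k * wt q k = wt (p + q) k := by
  unfold wt
  rw [← ENNReal.ofReal_mul (Real.rpow_nonneg (lam_pos k).le _), Real.rpow_add (lam_pos k)]

lemma wt_zero (k : Freq) : wt 0 k = 1 := by simp [wt]

lemma wt_sq (p : ℝ) (k : Freq) : wt p k ^ 2 = wt (2 * p) k := by
  rw [sq, wt_mul]; congr 1; ring

lemma wt_mono {p q : ℝ} (h : p ≤ q) (k : Freq) : wt p k ≤ wt q k :=
  ENNReal.ofReal_le_ofReal (Real.rpow_le_rpow_of_exponent_le (lam_ge_one k) h)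

lemma wt_ne_top (p : ℝ) (k : Freq) : wt p k ≠ ∞ := ENNReal.ofReal_ne_top

lemma wt_pos (p : ℝ) (k : Freq) : wt p k ≠ 0 := by
  simp only [wt, ne_eq, ENNReal.ofReal_eq_zero, not_le]
  exact Real.rpow_pos_of_pos (lam_pos k) _

/-- Squared Sobolev norm with values in `[0,∞]`. -/
def EE (σ : ℝ) (c : Coef) : ℝ≥0∞ := ∑' k, wt σ k * ‖c k‖ₑ ^ 2

lemma EE_mono {p q : ℝ} (h : p ≤ q) (c : Coef) : EE p c ≤ EE q c :=
  ENNReal.tsum_le_tsum fun k => mul_le_mul_left (wt_mono h k) _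

lemma ennreal_two_mul_le (x y : ℝ≥0∞) : 2 * (x * y) ≤ x ^ 2 + y ^ 2 := by
  rcases eq_or_ne x ∞ with rfl | hx
  · simp
  rcases eq_or_ne y ∞ with rfl | hy
  · simp
  lift x to NNReal using hx
  lift y to NNReal using hy
  norm_cast
  have := two_mul_le_add_sq x y
  calc _ = 2 * x * y := by ring
    _ ≤ _ := this

lemma ennreal_add_sq_le (x y : ℝ≥0∞) : (x + y) ^ 2 ≤ 2 * x ^ 2 + 2 * y ^ 2 := by
  have := ennreal_two_mul_le x y
  calc (x + y) ^ 2 = x ^ 2 + y ^ 2 + 2 * (x * y) := by ring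
    _ ≤ x ^ 2 + y ^ 2 + (x ^ 2 + y ^ 2) := by gcongr
    _ = _ := by ring

/-- Cauchy–Schwarz. -/
lemma ennreal_cs {ι : Type*} (a b : ι → ℝ≥0∞) :
    (∑' i, a i * b i) ^ 2 ≤ (∑' i, a i) * ∑' i, a i * b i ^ 2 := by
  have h : 2 * (∑' i, a i * b i) ^ 2 ≤ 2 * ((∑' i, a i) * ∑' i, a i * b i ^ 2) := by
    have e1 : (∑' i, a i * b i) ^ 2 = ∑' i, ∑' j, a i * b i * (a j * b j) := by
      rw [sq, ← ENNReal.tsum_mul_right]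
      simp_rw [ENNReal.tsum_mul_left]
    have e2 : (∑' i, a i) * ∑' i, a i * b i ^ 2 = ∑' i, ∑' j, a i * (a j * b j ^ 2) := by
      rw [← ENNReal.tsum_mul_right]
      simp_rw [ENNReal.tsum_mul_left]
    have e3 : (∑' i, a i) * ∑' i, a i * b i ^ 2 = ∑' i, ∑' j, a j * (a i * b i ^ 2) := by
      rw [e2, ENNReal.tsum_comm]
    calc 2 * (∑' i, a i * b i) ^ 2
        = ∑' i, ∑' j, a i * a j * (2 * (b i * b j)) := by
          rw [e1, ← ENNReal.tsum_mul_left]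
          refine tsum_congr fun i => ?_
          rw [← ENNReal.tsum_mul_left]
          refine tsum_congr fun j => ?_
          ring
      _ ≤ ∑' i, ∑' j, (a j * (a i * b i ^ 2) + a i * (a j * b j ^ 2)) := by
          refine ENNReal.tsum_le_tsum fun i => ENNReal.tsum_le_tsum fun j => ?_
          calc a i * a j * (2 * (b i * b j)) ≤ a i * a j * (b i ^ 2 + b j ^ 2) := by
                gcongr; exact ennreal_two_mul_le _ _
            _ = _ := by ring
      _ = 2 * ((∑' i, a i) * ∑' i, a i * b i ^ 2) := by
          simp_rw [ENNReal.tsum_add]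
          rw [← e3, ← e2]; ring
  exact (ENNReal.mul_le_mul_iff_right two_ne_zero ENNReal.ofNat_ne_top).1 h

lemma ennreal_cs' {ι : Type*} (a b : ι → ℝ≥0∞) (ha : ∀ i, a i ≠ 0) (ha' : ∀ i, a i ≠ ∞) :
    (∑' i, a i * b i) ^ 2 ≤ (∑' i, a i ^ 2) * ∑' i, b i ^ 2 := by
  have := ennreal_cs (fun i => a i ^ 2) (fun i => (a i)⁻¹ * b i)
  have e1 : ∀ i, a i ^ 2 * ((a i)⁻¹ * b i) = a i * b i := fun i => by
    rw [sq, mul_assoc, ← mul_assoc (a i) (a i)⁻¹, ENNReal.mul_inv_cancel (ha i) (ha' i), one_mul]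
  have e2 : ∀ i, a i ^ 2 * ((a i)⁻¹ * b i) ^ 2 = b i ^ 2 := fun i => by
    rw [mul_pow, ← mul_assoc, ← mul_pow, ENNReal.mul_inv_cancel (ha i) (ha' i), one_pow, one_mul]
  simpa only [e1, e2] using this

/-- Extension by zero to all frequencies. -/
def ext0 (F : Freq → ℝ≥0∞) (n : ℤ × ℤ) : ℝ≥0∞ := if h : n ≠ 0 then F ⟨n, h⟩ else 0

lemma ext0_coe (F : Freq → ℝ≥0∞) (k : Freq) : ext0 F k.1 = F k := by
  obtain ⟨k, hk⟩ := k
  unfold ext0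
  rw [dif_pos hk]

lemma ext0_zero (F : Freq → ℝ≥0∞) : ext0 F 0 = 0 := by simp [ext0]

lemma tsum_Freq_eq (F : ℤ × ℤ → ℝ≥0∞) (h0 : F 0 = 0) : ∑' k : Freq, F k.1 = ∑' n, F n := by
  apply Function.Injective.tsum_eq (g := fun k : Freq => k.1)
  · intro a b h; exact Subtype.ext h
  · intro n hn
    have : n ≠ 0 := by rintro rfl; exact hn h0
    exact ⟨⟨n, this⟩, rfl⟩

lemma tsum_ext0 (F : Freq → ℝ≥0∞) : ∑' n, ext0 F n = ∑' k, F k := by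
  rw [← tsum_Freq_eq _ (ext0_zero F)]
  simp_rw [ext0_coe]

/-- convolution -/
def cv (A B : Freq → ℝ≥0∞) (k : Freq) : ℝ≥0∞ := ∑' m : ℤ × ℤ, ext0 A m * ext0 B (k.1 - m)

lemma cv_comm (A B : Freq → ℝ≥0∞) (k : Freq) : cv A B k = cv B A k := by
  unfold cv
  rw [← (Equiv.subLeft k.1).tsum_eq]
  refine tsum_congr fun m => ?_
  simp [mul_comm]

lemma young (A B : Freq → ℝ≥0∞) : ∑' k, (cv A B k) ^ 2 ≤ (∑' k, A k) ^ 2 * ∑' k, B k ^ 2 := by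
  have h1 : ∀ k, (cv A B k) ^ 2 ≤
      (∑' k, A k) * ∑' m : ℤ × ℤ, ext0 A m * ext0 B (k.1 - m) ^ 2 := fun k => by
    have := ennreal_cs (ext0 A) (fun m => ext0 B (k.1 - m))
    rwa [tsum_ext0] at this
  calc ∑' k, (cv A B k) ^ 2
      ≤ ∑' k : Freq, (∑' k, A k) * ∑' m : ℤ × ℤ, ext0 A m * ext0 B (k.1 - m) ^ 2 :=
        ENNReal.tsum_le_tsum h1
    _ = (∑' k, A k) * ∑' m : ℤ × ℤ, ∑' k : Freq, ext0 A m * ext0 B (k.1 - m) ^ 2 := by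
        rw [ENNReal.tsum_mul_left, ENNReal.tsum_comm]
    _ ≤ (∑' k, A k) * ∑' m : ℤ × ℤ, ext0 A m * ∑' k, B k ^ 2 := by
        gcongr with m
        rw [ENNReal.tsum_mul_left]
        refine mul_le_mul_right ?_ _
        have e : ∀ n, ext0 (fun k => B k ^ 2) n = ext0 B n ^ 2 := fun n => by
          unfold ext0; split_ifs <;> simp
        calc ∑' k : Freq, ext0 B (k.1 - m) ^ 2 = ∑' k : Freq, ext0 (fun k => B k ^ 2) (k.1 - m) := by
              simp_rw [e]
          _ ≤ ∑' n : ℤ × ℤ, ext0 (fun k => B k ^ 2) (n - m) :=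
              ENNReal.tsum_comp_le_tsum_of_injective (f := fun k : Freq => k.1)
                (fun a b h => Subtype.ext h) (fun n => ext0 (fun k => B k ^ 2) (n - m))
          _ = ∑' n : ℤ × ℤ, ext0 (fun k => B k ^ 2) n :=
              (Equiv.subRight m).tsum_eq (fun n => ext0 (fun k => B k ^ 2) n)
          _ = _ := tsum_ext0 _
    _ = _ := by rw [ENNReal.tsum_mul_right, tsum_ext0]; ring

lemma cv_le_of {A B A' B' : Freq → ℝ≥0∞} {k : Freq} {x : ℝ≥0∞}
    (h : ∀ m n : Freq, m.1 + n.1 = k.1 → x * (A m * B n) ≤ A' m * B' n) :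
    x * cv A B k ≤ cv A' B' k := by
  unfold cv
  rw [← ENNReal.tsum_mul_left]
  refine ENNReal.tsum_le_tsum fun m => ?_
  by_cases hm : m ≠ 0
  · by_cases hn : k.1 - m ≠ 0
    · have := h ⟨m, hm⟩ ⟨k.1 - m, hn⟩ (by simp)
      simpa [ext0, hm, hn] using this
    · simp [ext0, hn]
  · simp [ext0, hm]

lemma cv_le_of_add {A B A' B' A'' B'' : Freq → ℝ≥0∞} {k : Freq} {x : ℝ≥0∞}
    (h : ∀ m n : Freq, m.1 + n.1 = k.1 → x * (A m * B n) ≤ A' m * B' n + A'' m * B'' n) :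
    x * cv A B k ≤ cv A' B' k + cv A'' B'' k := by
  unfold cv
  rw [← ENNReal.tsum_mul_left, ← ENNReal.tsum_add]
  refine ENNReal.tsum_le_tsum fun m => ?_
  by_cases hm : m ≠ 0
  · by_cases hn : k.1 - m ≠ 0
    · have := h ⟨m, hm⟩ ⟨k.1 - m, hn⟩ (by simp)
      simpa [ext0, hm, hn] using this
    · simp [ext0, hn]
  · simp [ext0, hm]

lemma knormSq_add {m n k : Freq} (h : m.1 + n.1 = k.1) :
    knormSq k ≤ 2 * knormSq m + 2 * knormSq n := by
  have h1 : (k.1.1 : ℝ) = m.1.1 + n.1.1 := by rw [← h]; simp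
  have h2 : (k.1.2 : ℝ) = m.1.2 + n.1.2 := by rw [← h]; simp
  unfold knormSq
  rw [h1, h2]
  nlinarith [sq_nonneg ((m.1.1 : ℝ) - n.1.1), sq_nonneg ((m.1.2 : ℝ) - n.1.2)]

lemma lam_le_mul {m n k : Freq} (h : m.1 + n.1 = k.1) : lam k ≤ lam m * lam n := by
  have h1 := knormSq_add h
  have h2 := knormSq_ge_one m
  have h3 := knormSq_ge_one n
  have h4 := four_pi_sq_ge
  unfold lam
  have h5 : knormSq k ≤ 4 * (knormSq m * knormSq n) := by nlinarith
  calc 4 * Real.pi ^ 2 * knormSq k ≤ 4 * Real.pi ^ 2 * (4 * (knormSq m * knormSq n)) := by gcongr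
    _ ≤ 4 * Real.pi ^ 2 * (4 * Real.pi ^ 2 * (knormSq m * knormSq n)) := by gcongr
    _ = _ := by ring

lemma lam_fneg (k : Freq) : lam (fneg k) = lam k := by
  simp [lam, knormSq, fneg]

lemma lam_le_max {m n k : Freq} (h : m.1 + n.1 = k.1) : lam k ≤ 4 * max (lam m) (lam n) := by
  have h1 := knormSq_add h
  have h4 : 0 < 4 * Real.pi ^ 2 := by positivity
  have h5 : lam k ≤ 2 * lam m + 2 * lam n := by
    unfold lam; nlinarith
  have := le_max_left (lam m) (lam n)
  have := le_max_right (lam m) (lam n)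
  linarith

lemma wt_conv {m n k : Freq} (h : m.1 + n.1 = k.1) (p : ℝ) : wt p k ≤ wt |p| m * wt p n := by
  have hk := lam_pos k
  have hm := lam_pos m
  have hn := lam_pos n
  unfold wt
  rw [← ENNReal.ofReal_mul (by positivity)]
  refine ENNReal.ofReal_le_ofReal ?_
  rcases le_or_gt 0 p with hp | hp
  · rw [abs_of_nonneg hp, ← Real.mul_rpow hm.le hn.le]
    exact Real.rpow_le_rpow hk.le (lam_le_mul h) hp
  · have h' : (fneg m).1 + k.1 = n.1 := by rw [← h]; simp [fneg]
    have h2 := lam_le_mul h'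
    rw [lam_fneg] at h2
    have h3 : lam n ^ (-p) ≤ lam m ^ (-p) * lam k ^ (-p) := by
      rw [← Real.mul_rpow hm.le hk.le]
      exact Real.rpow_le_rpow hn.le h2 (by linarith)
    rw [abs_of_neg hp]
    rw [Real.rpow_neg hn.le, Real.rpow_neg hk.le] at h3
    have hkp : 0 < lam k ^ p := by positivity
    have hnp : 0 < lam n ^ p := by positivity
    rw [inv_le_iff_one_le_mul₀ hnp] at h3
    calc lam k ^ p = lam k ^ p * 1 := by ring
      _ ≤ lam k ^ p * (lam m ^ (-p) * (lam k ^ p)⁻¹ * lam n ^ p) := by gcongr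
      _ = _ := by field_simp

lemma wt_conv2 {m n k : Freq} (h : m.1 + n.1 = k.1) {σ : ℝ} (hσ : 0 ≤ σ + 1 / 2) :
    wt ((σ + 1 / 2) / 2) k ≤ ENNReal.ofReal (4 ^ ((σ + 1 / 2) / 2)) *
      (wt (-1 / 4) m * wt ((σ + 1) / 2) n + wt ((σ + 1) / 2) m * wt (-1 / 4) n) := by
  have hk := lam_pos k
  have hm := lam_pos m
  have hn := lam_pos n
  unfold wt
  rw [← ENNReal.ofReal_mul (by positivity), ← ENNReal.ofReal_mul (by positivity),
    ← ENNReal.ofReal_add (by positivity) (by positivity), ← ENNReal.ofReal_mul (by positivity)]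
  refine ENNReal.ofReal_le_ofReal ?_
  have key : ∀ x y : ℝ, 0 < x → x ≤ y → y ^ ((σ + 1 / 2) / 2) ≤ x ^ (-1 / 4 : ℝ) * y ^ ((σ + 1) / 2) := by
    intro x y hx hxy
    have hy : 0 < y := by linarith
    have e : (σ + 1 / 2) / 2 = -1 / 4 + (σ + 1) / 2 := by ring
    rw [e, Real.rpow_add hy]
    gcongr ?_ * _
    exact Real.rpow_le_rpow_of_nonpos hx hxy (by norm_num)
  calc lam k ^ ((σ + 1 / 2) / 2) ≤ (4 * max (lam m) (lam n)) ^ ((σ + 1 / 2) / 2) :=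
        Real.rpow_le_rpow hk.le (lam_le_max h) (by linarith)
    _ = 4 ^ ((σ + 1 / 2) / 2) * (max (lam m) (lam n)) ^ ((σ + 1 / 2) / 2) :=
        Real.mul_rpow (by norm_num) (by positivity)
    _ ≤ _ := by
        gcongr
        rcases le_total (lam m) (lam n) with hle | hle
        · rw [max_eq_right hle]
          have := key _ _ hm hle
          have : 0 ≤ lam m ^ ((σ + 1) / 2) * lam n ^ (-1 / 4 : ℝ) := by positivity
          linarith
        · rw [max_eq_left hle]
          have := key _ _ hn hle
          have : 0 ≤ lam m ^ (-1 / 4 : ℝ) * lam n ^ ((σ + 1) / 2) := by positivity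
          linarith

lemma abs_dot_le {a b c d : ℝ} : |a * b + c * d| ≤ Real.sqrt (a ^ 2 + c ^ 2) * Real.sqrt (b ^ 2 + d ^ 2) := by
  rw [← Real.sqrt_mul (by positivity)]
  apply Real.abs_le_sqrt
  nlinarith [sq_nonneg (a * d - c * b)]

lemma evec_norm (k : Freq) : (evec k).1 ^ 2 + (evec k).2 ^ 2 = 1 := by
  have h := knormSq_ge_one k
  have : knormSq k ≠ 0 := by linarith
  simp only [evec]
  rw [div_pow, div_pow, Real.sq_sqrt (by linarith), ← add_div, div_eq_one_iff_eq this]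
  unfold knormSq; ring

lemma kernel_bound {m n k : Freq} (h : m.1 + n.1 = k.1) :
    |dotR (evec m) (fvec n) * dotR (evec n) (evec k)| ≤ Real.sqrt (knormSq k) := by
  have h1 : dotR (evec m) (fvec n) = dotR (evec m) (fvec k) := by
    have h1 : (k.1.1 : ℝ) = m.1.1 + n.1.1 := by rw [← h]; simp
    have h2 : (k.1.2 : ℝ) = m.1.2 + n.1.2 := by rw [← h]; simp
    simp only [dotR, fvec, h1, h2, evec]
    ring
  have h2 : |dotR (evec m) (fvec k)| ≤ Real.sqrt (knormSq k) := by
    have := abs_dot_le (a := (evec m).1) (b := (fvec k).1) (c := (evec m).2) (d := (fvec k).2)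
    rw [evec_norm, Real.sqrt_one, one_mul] at this
    exact this
  have h3 : |dotR (evec n) (evec k)| ≤ 1 := by
    have := abs_dot_le (a := (evec n).1) (b := (evec k).1) (c := (evec n).2) (d := (evec k).2)
    rw [evec_norm, evec_norm, Real.sqrt_one, one_mul] at this
    exact this
  rw [abs_mul, h1]
  calc _ ≤ Real.sqrt (knormSq k) * 1 := by gcongr
    _ = _ := mul_one _

lemma wt_half (k : Freq) : wt (1 / 2) k = ENNReal.ofReal (2 * Real.pi) * ENNReal.ofReal (Real.sqrt (knormSq k)) := by
  unfold wt
  rw [← ENNReal.ofReal_mul (by positivity), ← Real.sqrt_eq_rpow]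
  congr 1
  unfold lam
  rw [Real.sqrt_mul (by positivity)]
  congr 1
  rw [show 4 * Real.pi ^ 2 = (2 * Real.pi) ^ 2 by ring]
  exact Real.sqrt_sq (by positivity)

lemma Bc_le (c d : Coef) (k : Freq) :
    ‖Bc c d k‖ₑ ≤ wt (1 / 2) k * cv (fun k => ‖c k‖ₑ) (fun k => ‖d k‖ₑ) k := by
  unfold Bc
  rw [enorm_mul, wt_half, mul_assoc]
  have e1 : ‖(((2 * Real.pi : ℝ) : ℂ) * Complex.I)‖ₑ = ENNReal.ofReal (2 * Real.pi) := by
    rw [← ofReal_norm]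
    congr 1
    rw [norm_mul, Complex.norm_I, mul_one, Complex.norm_real, Real.norm_of_nonneg (by positivity)]
  rw [e1]
  gcongr
  refine enorm_tsum_le_tsum_enorm.trans ?_
  unfold cv
  rw [← ENNReal.tsum_mul_left, ← tsum_Freq_eq (fun m => _ * (ext0 _ m * ext0 _ (k.1 - m))) (by simp [ext0])]
  refine ENNReal.tsum_le_tsum fun m => ?_
  rw [ext0_coe]
  by_cases h : k.1 - m.1 ≠ 0
  · rw [dif_pos h, ext0, dif_pos h, enorm_mul, enorm_mul, mul_comm]
    gcongr
    rw [← ofReal_norm, Complex.norm_real]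
    exact ENNReal.ofReal_le_ofReal (kernel_bound (by simp))
  · rw [dif_neg h]; simp

/-- weighted `ℓ¹` norm of the Fourier coefficients. -/
def L1 (p : ℝ) (c : Coef) : ℝ≥0∞ := ∑' k, wt p k * ‖c k‖ₑ

lemma EE_Bc_aux (σ : ℝ) (c d : Coef) :
    ∑' k, (wt (σ / 2) k * cv (fun k => ‖c k‖ₑ) (fun k => ‖d k‖ₑ) k) ^ 2 ≤
      (L1 |σ / 2| c) ^ 2 * EE σ d := by
  refine le_trans (ENNReal.tsum_le_tsum fun k => ?_)
    ((young (fun k => wt |σ / 2| k * ‖c k‖ₑ) (fun k => wt (σ / 2) k * ‖d k‖ₑ)).trans_eq ?_)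
  · gcongr
    refine cv_le_of fun m n h => ?_
    calc wt (σ / 2) k * (‖c m‖ₑ * ‖d n‖ₑ) ≤ (wt |σ / 2| m * wt (σ / 2) n) * (‖c m‖ₑ * ‖d n‖ₑ) := by
          gcongr; exact wt_conv h _
      _ = _ := by ring
  · unfold L1 EE
    congr 1
    refine tsum_congr fun k => ?_
    rw [mul_pow, wt_sq]; congr 2; ring

lemma EE_Bc_pre (σ : ℝ) (c d : Coef) :
    EE (σ - 1) (Bc c d) ≤ ∑' k, (wt (σ / 2) k * cv (fun k => ‖c k‖ₑ) (fun k => ‖d k‖ₑ) k) ^ 2 := by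
  unfold EE
  refine ENNReal.tsum_le_tsum fun k => ?_
  calc wt (σ - 1) k * ‖Bc c d k‖ₑ ^ 2
      ≤ wt (σ - 1) k * (wt (1 / 2) k * cv (fun k => ‖c k‖ₑ) (fun k => ‖d k‖ₑ) k) ^ 2 := by
        gcongr; exact Bc_le c d k
    _ = _ := by
        rw [mul_pow, mul_pow, wt_sq, wt_sq, ← mul_assoc, wt_mul]; congr 2; ring

lemma EE_Bc_left (σ : ℝ) (c d : Coef) : EE (σ - 1) (Bc c d) ≤ (L1 |σ / 2| c) ^ 2 * EE σ d :=
  (EE_Bc_pre σ c d).trans (EE_Bc_aux σ c d)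

lemma EE_Bc_right (σ : ℝ) (c d : Coef) : EE (σ - 1) (Bc d c) ≤ (L1 |σ / 2| c) ^ 2 * EE σ d := by
  refine (EE_Bc_pre σ d c).trans ?_
  simp_rw [cv_comm (fun k => ‖d k‖ₑ)]
  exact EE_Bc_aux σ c d

lemma EE_Bc_self {σ : ℝ} (hσ : 0 ≤ σ + 1 / 2) (c : Coef) :
    EE (σ + 1 / 2 - 1) (Bc c c) ≤
      (2 * ENNReal.ofReal (4 ^ ((σ + 1 / 2) / 2))) ^ 2 * ((L1 (-1 / 4) c) ^ 2 * EE (σ + 1) c) := by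
  refine (EE_Bc_pre _ c c).trans ?_
  set K := ENNReal.ofReal (4 ^ ((σ + 1 / 2) / 2)) with hK
  set A : Freq → ℝ≥0∞ := fun k => wt (-1 / 4) k * ‖c k‖ₑ with hA
  set B : Freq → ℝ≥0∞ := fun k => wt ((σ + 1) / 2) k * ‖c k‖ₑ with hB
  have hstep : ∀ k, wt ((σ + 1 / 2) / 2) k * cv (fun k => ‖c k‖ₑ) (fun k => ‖c k‖ₑ) k ≤
      2 * K * cv A B k := by
    intro k
    have h1 := cv_le_of_add (A := fun k => ‖c k‖ₑ) (B := fun k => ‖c k‖ₑ)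
      (A' := fun k => K * A k) (B' := B) (A'' := fun k => K * B k) (B'' := A)
      (x := wt ((σ + 1 / 2) / 2) k) (k := k) (fun m n h => by
        calc wt ((σ + 1 / 2) / 2) k * (‖c m‖ₑ * ‖c n‖ₑ)
            ≤ (K * (wt (-1 / 4) m * wt ((σ + 1) / 2) n + wt ((σ + 1) / 2) m * wt (-1 / 4) n)) *
              (‖c m‖ₑ * ‖c n‖ₑ) := by
              gcongr; exact wt_conv2 h hσ
          _ = _ := by simp only [hA, hB]; ring)
    have hcvK : ∀ X Y : Freq → ℝ≥0∞, cv (fun k => K * X k) Y k = K * cv X Y k := by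
      intro X Y
      unfold cv
      rw [← ENNReal.tsum_mul_left]
      refine tsum_congr fun m => ?_
      unfold ext0
      split_ifs <;> ring
    rw [hcvK, hcvK, cv_comm B A] at h1
    refine h1.trans_eq (by ring)
  calc _ ≤ ∑' k, (2 * K * cv A B k) ^ 2 := ENNReal.tsum_le_tsum fun k => pow_le_pow_left' (hstep k) 2
    _ = (2 * K) ^ 2 * ∑' k, (cv A B k) ^ 2 := by
        rw [← ENNReal.tsum_mul_left]; exact tsum_congr fun k => mul_pow _ _ _
    _ ≤ (2 * K) ^ 2 * ((∑' k, A k) ^ 2 * ∑' k, B k ^ 2) := by gcongr; exact young A B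
    _ = _ := by
        congr 2
        unfold EE
        refine tsum_congr fun k => ?_
        rw [hB, mul_pow, wt_sq]; congr 2; ring

/-- the constant `Σ λ_k^{-3/2}`. -/
def ZZ : ℝ≥0∞ := ∑' k, wt (-3 / 2) k

lemma summable_lam : Summable fun k : Freq => lam k ^ (-3 / 2 : ℝ) := by
  have h := EisensteinSeries.summable_one_div_norm_rpow (k := 3) (by norm_num)
  have hinj : Function.Injective (fun k : Freq => (![k.1.1, k.1.2] : Fin 2 → ℤ)) := by
    intro a b hab
    have h0 := congrFun hab 0
    have h1 := congrFun hab 1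
    simp at h0 h1
    exact Subtype.ext (Prod.ext h0 h1)
  refine Summable.of_nonneg_of_le (fun k => Real.rpow_nonneg (lam_pos k).le _) (fun k => ?_)
    (h.comp_injective hinj)
  simp only [Function.comp]
  set x : Fin 2 → ℤ := ![k.1.1, k.1.2] with hx
  have hx1 : ‖x‖ ^ 2 ≤ lam k := by
    have h4 := four_pi_sq_ge
    have hk := knormSq_ge_one k
    have : ‖x‖ ^ 2 ≤ knormSq k := by
      have hle : ‖x‖ ≤ Real.sqrt (knormSq k) := by
        rw [pi_norm_le_iff_of_nonneg (Real.sqrt_nonneg _)]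
        intro i
        rw [Int.norm_eq_abs]
        apply Real.abs_le_sqrt
        fin_cases i
        · simp [hx, knormSq]; positivity
        · simp [hx, knormSq]; positivity
      calc ‖x‖ ^ 2 ≤ (Real.sqrt (knormSq k)) ^ 2 := by gcongr
        _ = knormSq k := Real.sq_sqrt (by linarith)
    unfold lam
    nlinarith
  have hxpos : 0 < ‖x‖ := by
    rw [norm_pos_iff]
    intro h0
    apply k.2
    have a0 := congrFun h0 0
    have a1 := congrFun h0 1
    simp [hx] at a0 a1
    exact Prod.ext a0 a1
  calc lam k ^ (-3 / 2 : ℝ) ≤ (‖x‖ ^ 2) ^ (-3 / 2 : ℝ) :=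
        Real.rpow_le_rpow_of_nonpos (by positivity) hx1 (by norm_num)
    _ = ‖x‖ ^ (-3 : ℝ) := by
        rw [← Real.rpow_natCast, ← Real.rpow_mul hxpos.le]; norm_num

lemma ZZ_ne_top : ZZ ≠ ∞ := by
  unfold ZZ wt
  rw [← ENNReal.ofReal_tsum_of_nonneg (fun k => Real.rpow_nonneg (lam_pos k).le _) summable_lam]
  exact ENNReal.ofReal_ne_top

lemma L1_sq_le (p : ℝ) (c : Coef) : (L1 p c) ^ 2 ≤ ZZ * EE (2 * p + 3 / 2) c := by
  have := ennreal_cs' (fun k => wt (-3 / 4) k) (fun k => wt (p + 3 / 4) k * ‖c k‖ₑ)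
    (fun k => wt_pos _ k) (fun k => wt_ne_top _ k)
  unfold L1 ZZ EE
  have e1 : ∀ k, wt (-3 / 4) k * (wt (p + 3 / 4) k * ‖c k‖ₑ) = wt p k * ‖c k‖ₑ := fun k => by
    rw [← mul_assoc, wt_mul]; congr 2; ring
  have e2 : ∀ k, wt (-3 / 4) k ^ 2 = wt (-3 / 2) k := fun k => by
    rw [wt_sq]; congr 1; ring
  have e3 : ∀ k, (wt (p + 3 / 4) k * ‖c k‖ₑ) ^ 2 = wt (2 * p + 3 / 2) k * ‖c k‖ₑ ^ 2 := fun k => by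
    rw [mul_pow, wt_sq]; congr 2; ring
  simpa only [e1, e2, e3] using this

lemma L1_mono {p q : ℝ} (h : p ≤ q) (c : Coef) : L1 p c ≤ L1 q c :=
  ENNReal.tsum_le_tsum fun k => mul_le_mul_left (wt_mono h k) _

lemma EE_add (σ : ℝ) (c d : Coef) : EE σ (c + d) ≤ 2 * EE σ c + 2 * EE σ d := by
  unfold EE
  rw [← ENNReal.tsum_mul_left, ← ENNReal.tsum_mul_left, ← ENNReal.tsum_add]
  refine ENNReal.tsum_le_tsum fun k => ?_
  calc wt σ k * ‖(c + d) k‖ₑ ^ 2 ≤ wt σ k * (‖c k‖ₑ + ‖d k‖ₑ) ^ 2 := by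
        gcongr; exact enorm_add_le _ _
    _ ≤ wt σ k * (2 * ‖c k‖ₑ ^ 2 + 2 * ‖d k‖ₑ ^ 2) := by gcongr; exact ennreal_add_sq_le _ _
    _ = _ := by ring

lemma EE_neg (σ : ℝ) (c : Coef) : EE σ (-c) = EE σ c := by simp [EE]

lemma EE_sub (σ : ℝ) (c d : Coef) : EE σ (c - d) ≤ 2 * EE σ c + 2 * EE σ d := by
  rw [sub_eq_add_neg, ← EE_neg σ d]; exact EE_add σ c (-d)

lemma EE_term_eq (σ : ℝ) (c : Coef) (k : Freq) :
    wt σ k * ‖c k‖ₑ ^ 2 = ENNReal.ofReal (lam k ^ σ * ‖c k‖ ^ 2) := by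
  rw [ENNReal.ofReal_mul (Real.rpow_nonneg (lam_pos k).le _), ENNReal.ofReal_pow (norm_nonneg _),
    ofReal_norm]; rfl

lemma term_nonneg (σ : ℝ) (c : Coef) (k : Freq) : 0 ≤ lam k ^ σ * ‖c k‖ ^ 2 :=
  mul_nonneg (Real.rpow_nonneg (lam_pos k).le _) (by positivity)

lemma finH_iff (σ : ℝ) (c : Coef) : FinH σ c ↔ EE σ c ≠ ∞ := by
  unfold FinH EE
  simp_rw [EE_term_eq]
  constructor
  · intro h
    rw [← ENNReal.ofReal_tsum_of_nonneg (term_nonneg σ c) h]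
    exact ENNReal.ofReal_ne_top
  · intro h
    have := ENNReal.summable_toReal h
    refine this.congr fun k => ?_
    rw [ENNReal.toReal_ofReal (term_nonneg σ c k)]

lemma EE_eq_ofReal {σ : ℝ} {c : Coef} (h : FinH σ c) : EE σ c = ENNReal.ofReal (hSq σ c) := by
  unfold EE hSq
  simp_rw [EE_term_eq]
  rw [← ENNReal.ofReal_tsum_of_nonneg (term_nonneg σ c) h]

lemma hSq_nonneg (σ : ℝ) (c : Coef) : 0 ≤ hSq σ c := tsum_nonneg (term_nonneg σ c)

lemma EE_eq_hN {σ : ℝ} {c : Coef} (h : FinH σ c) : EE σ c = ENNReal.ofReal (hN σ c ^ 2) := by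
  rw [EE_eq_ofReal h, hN, Real.sq_sqrt (hSq_nonneg σ c)]

lemma mode_le_EE (σ : ℝ) (c : Coef) (k : Freq) : wt σ k * ‖c k‖ₑ ^ 2 ≤ EE σ c :=
  ENNReal.le_tsum k

lemma EE_eq_zero {σ : ℝ} {c : Coef} (h : EE σ c = 0) : c = 0 := by
  funext k
  have := mode_le_EE σ c k
  rw [h, nonpos_iff_eq_zero, mul_eq_zero] at this
  rcases this with h1 | h1
  · exact absurd h1 (wt_pos σ k)
  · simpa using h1

end NS2D

namespace NS2D
open scoped ENNReal ComplexConjugate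

lemma scal_pair {w v G H : ℝ → ℂ} {μ t0 t1 : ℝ} (h01 : t0 ≤ t1)
    (hw : ContinuousOn w (Icc t0 t1)) (hv : ContinuousOn v (Icc t0 t1))
    (hwd : ∀ t ∈ Ioo t0 t1, HasDerivAt w (G t - (μ : ℂ) * w t) t)
    (hvd : ∀ t ∈ Ioo t0 t1, HasDerivAt v (H t - (μ : ℂ) * v t) t)
    (hG : IntegrableOn G (Ioc t0 t1)) (hH : IntegrableOn H (Ioc t0 t1)) :
    IntegrableOn (fun t => G t * conj (v t)) (Ioc t0 t1) ∧
    IntegrableOn (fun t => w t * conj (H t)) (Ioc t0 t1) ∧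
    IntegrableOn (fun t => w t * conj (v t)) (Ioc t0 t1) ∧
    ∫ t in Ioc t0 t1, (G t * conj (v t) + w t * conj (H t) - 2 * (μ : ℂ) * (w t * conj (v t))) =
      w t1 * conj (v t1) - w t0 * conj (v t0) := by
  have hvc : ContinuousOn (fun t => conj (v t)) (Icc t0 t1) :=
    Complex.continuous_conj.comp_continuousOn hv
  have hHc : IntegrableOn (fun t => conj (H t)) (Ioc t0 t1) :=
    (Complex.conjCLE.toContinuousLinearMap.integrable_comp hH :)
  have i1 : IntegrableOn (fun t => G t * conj (v t)) (Ioc t0 t1) := by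
    rw [← integrableOn_Icc_iff_integrableOn_Ioc] at hG ⊢
    exact hG.mul_continuousOn hvc isCompact_Icc
  have i2 : IntegrableOn (fun t => w t * conj (H t)) (Ioc t0 t1) := by
    rw [← integrableOn_Icc_iff_integrableOn_Ioc] at hHc ⊢
    exact hHc.continuousOn_mul hw isCompact_Icc
  have i3 : IntegrableOn (fun t => w t * conj (v t)) (Ioc t0 t1) :=
    ((hw.mul hvc).integrableOn_compact isCompact_Icc).mono_set Ioc_subset_Icc_self
  refine ⟨i1, i2, i3, ?_⟩
  rw [← intervalIntegral.integral_of_le h01]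
  refine intervalIntegral.integral_eq_sub_of_hasDerivAt_of_le h01 (hw.mul hvc)
    (fun t ht => ?_) ?_
  · have h1 := hwd t ht
    have h2 := hvd t ht
    have h3 : HasDerivAt (fun s => conj (v s)) (conj (H t - (μ : ℂ) * v t)) t := h2.star
    refine (h1.mul h3).congr_deriv ?_
    simp only [map_sub, map_mul, Complex.conj_ofReal]
    ring
  · rw [intervalIntegrable_iff_integrableOn_Ioc_of_le h01]
    exact (i1.add i2).sub (i3.const_mul _)

lemma scal_energy_real {w G : ℝ → ℂ} {μ t0 t1 : ℝ} (hμ : 0 < μ) (h01 : t0 ≤ t1)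
    (hw : ContinuousOn w (Icc t0 t1))
    (hwd : ∀ t ∈ Ioo t0 t1, HasDerivAt w (G t - (μ : ℂ) * w t) t)
    (hG : IntegrableOn G (Ioc t0 t1)) (hG2 : IntegrableOn (fun t => ‖G t‖ ^ 2) (Ioc t0 t1)) :
    IntegrableOn (fun t => ‖w t‖ ^ 2) (Ioc t0 t1) ∧
    ‖w t1‖ ^ 2 + μ * ∫ t in Ioc t0 t1, ‖w t‖ ^ 2 ≤ ‖w t0‖ ^ 2 + μ⁻¹ * ∫ t in Ioc t0 t1, ‖G t‖ ^ 2 ∧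
    ‖w t0‖ ^ 2 ≤ ‖w t1‖ ^ 2 + (3 * μ * (∫ t in Ioc t0 t1, ‖w t‖ ^ 2) +
      μ⁻¹ * ∫ t in Ioc t0 t1, ‖G t‖ ^ 2) := by
  obtain ⟨i1, i2, i3, hid⟩ := scal_pair h01 hw hw hwd hwd hG hG
  have iw : IntegrableOn (fun t => ‖w t‖ ^ 2) (Ioc t0 t1) :=
    ((hw.norm.pow 2).integrableOn_compact isCompact_Icc).mono_set Ioc_subset_Icc_self
  have hre := congrArg Complex.re hid
  have iall : IntegrableOn (fun t => G t * conj (w t) + w t * conj (G t) - 2 * (μ : ℂ) * (w t * conj (w t)))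
    (Ioc t0 t1) := (i1.add i2).sub (i3.const_mul _)
  have hre2 : ∫ t in Ioc t0 t1, (G t * conj (w t) + w t * conj (G t) - 2 * (μ : ℂ) * (w t * conj (w t))).re
      = ‖w t1‖ ^ 2 - ‖w t0‖ ^ 2 := by
    have hh : ∀ z : ℂ, (z * conj z).re = ‖z‖ ^ 2 := fun z => by
      rw [Complex.mul_conj, Complex.ofReal_re, Complex.normSq_eq_norm_sq]
    rw [← hh, ← hh, ← Complex.sub_re, ← hre]
    exact integral_re iall
  have key : ∀ t, |(G t * conj (w t) + w t * conj (G t)).re| ≤ μ * ‖w t‖ ^ 2 + μ⁻¹ * ‖G t‖ ^ 2 := by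
    intro t
    have h1 : |(G t * conj (w t) + w t * conj (G t)).re| ≤ 2 * (‖G t‖ * ‖w t‖) := by
      refine (Complex.abs_re_le_norm _).trans ((norm_add_le _ _).trans ?_)
      simp only [norm_mul, RCLike.norm_conj]
      linarith [mul_comm ‖G t‖ ‖w t‖]
    refine h1.trans ?_
    have h3 : 0 ≤ (μ * ‖w t‖ - ‖G t‖) ^ 2 * μ⁻¹ := by positivity
    have h4 : (μ * ‖w t‖ - ‖G t‖) ^ 2 * μ⁻¹ = μ * ‖w t‖ ^ 2 + μ⁻¹ * ‖G t‖ ^ 2 - 2 * (‖G t‖ * ‖w t‖) := by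
      field_simp
      ring
    linarith
  have hsub : ∀ t, (G t * conj (w t) + w t * conj (G t) - 2 * (μ : ℂ) * (w t * conj (w t))).re =
      (G t * conj (w t) + w t * conj (G t)).re - 2 * μ * ‖w t‖ ^ 2 := by
    intro t
    rw [Complex.sub_re]
    congr 1
    rw [Complex.mul_conj, Complex.normSq_eq_norm_sq]
    norm_cast
  have up : ‖w t1‖ ^ 2 - ‖w t0‖ ^ 2 ≤ ∫ t in Ioc t0 t1, (μ⁻¹ * ‖G t‖ ^ 2 - μ * ‖w t‖ ^ 2) := by
    rw [← hre2]
    refine integral_mono iall.re ((hG2.const_mul _).sub (iw.const_mul _)) fun t => ?_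
    have := (abs_le.1 (key t)).2
    change (G t * conj (w t) + w t * conj (G t) - 2 * (μ : ℂ) * (w t * conj (w t))).re ≤ _
    rw [hsub]
    linarith
  have dn : ∫ t in Ioc t0 t1, (- (3 * μ * ‖w t‖ ^ 2 + μ⁻¹ * ‖G t‖ ^ 2)) ≤ ‖w t1‖ ^ 2 - ‖w t0‖ ^ 2 := by
    rw [← hre2]
    refine integral_mono ((iw.const_mul _).add (hG2.const_mul _)).neg iall.re fun t => ?_
    have := (abs_le.1 (key t)).1
    change _ ≤ (G t * conj (w t) + w t * conj (G t) - 2 * (μ : ℂ) * (w t * conj (w t))).re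
    rw [hsub]
    linarith
  rw [integral_sub (hG2.const_mul _) (iw.const_mul _), integral_const_mul, integral_const_mul] at up
  rw [integral_neg, integral_add (iw.const_mul _) (hG2.const_mul _), integral_const_mul, integral_const_mul] at dn
  exact ⟨iw, by linarith, by linarith⟩

lemma lint_sq_eq {G : ℝ → ℂ} {s : Set ℝ} (hG2 : IntegrableOn (fun t => ‖G t‖ ^ 2) s) :
    ∫⁻ t in s, ‖G t‖ₑ ^ 2 = ENNReal.ofReal (∫ t in s, ‖G t‖ ^ 2) := by
  rw [ofReal_integral_eq_lintegral_ofReal hG2 (ae_of_all _ fun t => by positivity)]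
  refine lintegral_congr fun t => ?_
  rw [ENNReal.ofReal_pow (norm_nonneg _), ofReal_norm]

lemma sq_integrable_of {G : ℝ → ℂ} {t0 t1 : ℝ}
    (hm : AEStronglyMeasurable G (volume.restrict (Ioc t0 t1)))
    (hfin : ∫⁻ t in Ioc t0 t1, ‖G t‖ₑ ^ 2 ≠ ∞) :
    IntegrableOn G (Ioc t0 t1) ∧ IntegrableOn (fun t => ‖G t‖ ^ 2) (Ioc t0 t1) := by
  have h2 : IntegrableOn (fun t => ‖G t‖ ^ 2) (Ioc t0 t1) := by
    refine ⟨hm.norm.pow 2, ?_⟩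
    rw [hasFiniteIntegral_iff_enorm]
    refine lt_of_le_of_lt (lintegral_mono fun t => ?_) (lt_top_iff_ne_top.2 hfin)
    simp
  refine ⟨?_, h2⟩
  have h1 : IntegrableOn (fun t => (1 : ℝ) + ‖G t‖ ^ 2) (Ioc t0 t1) :=
    (integrable_const (1 : ℝ)).add h2
  refine h1.mono' hm (ae_of_all _ fun t => ?_)
  nlinarith [sq_nonneg (‖G t‖ - 1), norm_nonneg (G t)]

lemma scal_energy {w G : ℝ → ℂ} {μ t0 t1 : ℝ} (hμ : 0 < μ) (h01 : t0 ≤ t1)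
    (hw : ContinuousOn w (Icc t0 t1))
    (hwd : ∀ t ∈ Ioo t0 t1, HasDerivAt w (G t - (μ : ℂ) * w t) t)
    (hm : AEStronglyMeasurable G (volume.restrict (Ioc t0 t1))) :
    ‖w t1‖ₑ ^ 2 + ENNReal.ofReal μ * ∫⁻ t in Ioc t0 t1, ‖w t‖ₑ ^ 2 ≤
      ‖w t0‖ₑ ^ 2 + ENNReal.ofReal μ⁻¹ * ∫⁻ t in Ioc t0 t1, ‖G t‖ₑ ^ 2 ∧
    ‖w t0‖ₑ ^ 2 ≤ ‖w t1‖ₑ ^ 2 + (ENNReal.ofReal (3 * μ) * (∫⁻ t in Ioc t0 t1, ‖w t‖ₑ ^ 2) +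
      ENNReal.ofReal μ⁻¹ * ∫⁻ t in Ioc t0 t1, ‖G t‖ₑ ^ 2) := by
  by_cases hfin : ∫⁻ t in Ioc t0 t1, ‖G t‖ₑ ^ 2 = ∞
  · have hne : ENNReal.ofReal μ⁻¹ ≠ 0 := by simpa using hμ
    rw [hfin, ENNReal.mul_top hne]
    simp
  obtain ⟨hG, hG2⟩ := sq_integrable_of hm hfin
  obtain ⟨iw, h1, h2⟩ := scal_energy_real hμ h01 hw hwd hG hG2
  rw [lint_sq_eq hG2, lint_sq_eq iw]
  have n1 : 0 ≤ ∫ t in Ioc t0 t1, ‖w t‖ ^ 2 := integral_nonneg fun t => by positivity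
  have n2 : 0 ≤ ∫ t in Ioc t0 t1, ‖G t‖ ^ 2 := integral_nonneg fun t => by positivity
  have e : ∀ z : ℂ, ‖z‖ₑ ^ 2 = ENNReal.ofReal (‖z‖ ^ 2) := fun z => by
    rw [ENNReal.ofReal_pow (norm_nonneg _), ofReal_norm]
  rw [e, e, ← ENNReal.ofReal_mul (by positivity), ← ENNReal.ofReal_mul (by positivity),
    ← ENNReal.ofReal_mul (by positivity), ← ENNReal.ofReal_add (by positivity) (by positivity),
    ← ENNReal.ofReal_add (by positivity) (by positivity),
    ← ENNReal.ofReal_add (by positivity) (by positivity),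
    ← ENNReal.ofReal_add (by positivity) (by positivity)]
  exact ⟨ENNReal.ofReal_le_ofReal h1, ENNReal.ofReal_le_ofReal h2⟩

/-- `W` solves (mode by mode) the heat equation with source `N`. -/
structure Par (ν T : ℝ) (W N : ℝ → Coef) : Prop where
  cont : ∀ k, ContinuousOn (fun t => W t k) (Icc 0 T)
  der : ∀ k, ∀ t ∈ Ioc 0 T, HasDerivAt (fun s => W s k) (N t k - ((ν * lam k : ℝ) : ℂ) * W t k) t

namespace Par
variable {ν T : ℝ} {W N : ℝ → Coef}

lemma measW (h : Par ν T W N) (k : Freq) {t0 t1 : ℝ} (h0 : 0 ≤ t0) (h1 : t1 ≤ T) :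
    AEStronglyMeasurable (fun t => W t k) (volume.restrict (Ioc t0 t1)) :=
  ((h.cont k).mono (fun t ht => ⟨h0.trans ht.1.le, ht.2.trans h1⟩)).aestronglyMeasurable
    measurableSet_Ioc

lemma measN (h : Par ν T W N) (k : Freq) {t0 t1 : ℝ} (h0 : 0 ≤ t0) (h1 : t1 ≤ T) :
    AEStronglyMeasurable (fun t => N t k) (volume.restrict (Ioc t0 t1)) := by
  have hd : AEStronglyMeasurable (fun t => deriv (fun s => W s k) t + ((ν * lam k : ℝ) : ℂ) * W t k)
      (volume.restrict (Ioc t0 t1)) :=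
    (measurable_deriv (fun s => W s k)).aestronglyMeasurable.add ((h.measW k h0 h1).const_mul _)
  refine hd.congr ?_
  filter_upwards [ae_restrict_mem measurableSet_Ioc] with t ht
  rw [(h.der k t ⟨h0.trans_lt ht.1, ht.2.trans h1⟩).deriv]
  ring

lemma lint_EE {X : ℝ → Coef} {t0 t1 : ℝ}
    (hX : ∀ k, AEStronglyMeasurable (fun t => X t k) (volume.restrict (Ioc t0 t1))) (σ : ℝ) :
    ∫⁻ t in Ioc t0 t1, EE σ (X t) = ∑' k, wt σ k * ∫⁻ t in Ioc t0 t1, ‖X t k‖ₑ ^ 2 := by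
  unfold EE
  rw [lintegral_tsum fun k => ((hX k).enorm.pow_const 2).const_mul _]
  refine tsum_congr fun k => ?_
  rw [lintegral_const_mul' _ _ (wt_ne_top σ k)]

lemma wt_ofReal (hν : 0 < ν) (σ : ℝ) (k : Freq) :
    wt σ k * ENNReal.ofReal (ν * lam k) = ENNReal.ofReal ν * wt (σ + 1) k := by
  rw [ENNReal.ofReal_mul hν.le, ← wt_mul]
  have : wt 1 k = ENNReal.ofReal (lam k) := by simp [wt]
  rw [this]; ring

lemma wt_ofReal_inv (hν : 0 < ν) (σ : ℝ) (k : Freq) :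
    wt σ k * ENNReal.ofReal (ν * lam k)⁻¹ = ENNReal.ofReal ν⁻¹ * wt (σ - 1) k := by
  rw [mul_inv, ENNReal.ofReal_mul (by positivity), sub_eq_add_neg, ← wt_mul]
  have : wt (-1) k = ENNReal.ofReal (lam k)⁻¹ := by
    unfold wt; rw [Real.rpow_neg_one]
  rw [this]; ring

lemma energy (h : Par ν T W N) (hν : 0 < ν) (σ : ℝ) {t0 t1 : ℝ} (h0 : 0 ≤ t0) (h01 : t0 ≤ t1)
    (h1 : t1 ≤ T) :
    EE σ (W t1) + ENNReal.ofReal ν * ∫⁻ t in Ioc t0 t1, EE (σ + 1) (W t) ≤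
      EE σ (W t0) + ENNReal.ofReal ν⁻¹ * ∫⁻ t in Ioc t0 t1, EE (σ - 1) (N t) := by
  rw [lint_EE (fun k => h.measW k h0 h1), lint_EE (fun k => h.measN k h0 h1),
    ← ENNReal.tsum_mul_left, ← ENNReal.tsum_mul_left, EE, EE, ← ENNReal.tsum_add, ← ENNReal.tsum_add]
  refine ENNReal.tsum_le_tsum fun k => ?_
  have := (scal_energy (μ := ν * lam k) (mul_pos hν (lam_pos k)) h01
    ((h.cont k).mono (Icc_subset_Icc h0 h1))
    (fun t ht => h.der k t ⟨h0.trans_lt ht.1, ht.2.le.trans h1⟩) (h.measN k h0 h1)).1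
  have := mul_le_mul_right this (wt σ k)
  rwa [mul_add, mul_add, ← mul_assoc, ← mul_assoc, wt_ofReal hν, wt_ofReal_inv hν, mul_assoc,
    mul_assoc] at this

lemma energy_rev (h : Par ν T W N) (hν : 0 < ν) (σ : ℝ) {t0 t1 : ℝ} (h0 : 0 ≤ t0) (h01 : t0 ≤ t1)
    (h1 : t1 ≤ T) :
    EE σ (W t0) ≤ EE σ (W t1) + (3 * ENNReal.ofReal ν * ∫⁻ t in Ioc t0 t1, EE (σ + 1) (W t)) +
       ENNReal.ofReal ν⁻¹ * ∫⁻ t in Ioc t0 t1, EE (σ - 1) (N t) := by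
  rw [lint_EE (fun k => h.measW k h0 h1), lint_EE (fun k => h.measN k h0 h1),
    ← ENNReal.tsum_mul_left, ← ENNReal.tsum_mul_left, EE, EE, ← ENNReal.tsum_add, ← ENNReal.tsum_add]
  refine ENNReal.tsum_le_tsum fun k => ?_
  have := (scal_energy (μ := ν * lam k) (mul_pos hν (lam_pos k)) h01
    ((h.cont k).mono (Icc_subset_Icc h0 h1))
    (fun t ht => h.der k t ⟨h0.trans_lt ht.1, ht.2.le.trans h1⟩) (h.measN k h0 h1)).2
  have := mul_le_mul_right this (wt σ k)
  rw [ENNReal.ofReal_mul (by norm_num), ENNReal.ofReal_ofNat] at this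
  refine this.trans_eq ?_
  rw [mul_add, mul_add, ← mul_assoc (wt σ k) (3 * _), mul_left_comm (wt σ k) 3, ← mul_assoc (wt σ k) (ENNReal.ofReal (ν * lam k)⁻¹),
    wt_ofReal hν, wt_ofReal_inv hν]
  ring

end Par

/-- Gronwall, in the form used here. -/
lemma gronwall (T : ℝ) {C : ℝ≥0∞} (hC : C ≠ ∞) :
    ∃ K : ℝ≥0∞, K ≠ ∞ ∧ ∀ (A B : ℝ≥0∞) (Y : ℝ → ℝ≥0∞), B ≠ ∞ → (∀ t ∈ Icc 0 T, Y t ≤ B) →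
      (∀ t ∈ Icc 0 T, Y t ≤ A + C * ∫⁻ s in Ioc 0 t, Y s) → ∀ t ∈ Icc 0 T, Y t ≤ K * A := by
  set κ : ℝ := 2 * (C.toReal + 1) with hκ
  have hκ0 : 0 < κ := by have := ENNReal.toReal_nonneg (a := C); positivity
  refine ⟨ENNReal.ofReal (Real.exp (κ * T)) * 2, by finiteness, fun A B Y hB hYB hY => ?_⟩
  set S : ℝ≥0∞ := ⨆ t ∈ Icc (0:ℝ) T, ENNReal.ofReal (Real.exp (-(κ * t))) * Y t with hS
  have hSB : S ≤ B := by
    refine iSup₂_le fun t ht => ?_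
    calc _ ≤ 1 * B := by
          gcongr
          · rw [← ENNReal.ofReal_one]
            apply ENNReal.ofReal_le_ofReal
            rw [Real.exp_le_one_iff]
            have := mul_nonneg hκ0.le ht.1
            linarith
          · exact hYB t ht
      _ = B := one_mul _
  have hSfin : S ≠ ∞ := ne_top_of_le_ne_top hB hSB
  have hee : ∀ t : ℝ, ENNReal.ofReal (Real.exp (κ * t)) * ENNReal.ofReal (Real.exp (-(κ * t))) = 1 := by
    intro t
    rw [← ENNReal.ofReal_mul (Real.exp_pos _).le, ← Real.exp_add]
    simp
  have hYS : ∀ t ∈ Icc (0:ℝ) T, Y t ≤ ENNReal.ofReal (Real.exp (κ * t)) * S := by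
    intro t ht
    have h1 : ENNReal.ofReal (Real.exp (-(κ * t))) * Y t ≤ S :=
      le_iSup₂ (f := fun t (_ : t ∈ Icc (0:ℝ) T) => ENNReal.ofReal (Real.exp (-(κ * t))) * Y t) t ht
    calc Y t = ENNReal.ofReal (Real.exp (κ * t)) * (ENNReal.ofReal (Real.exp (-(κ * t))) * Y t) := by
          rw [← mul_assoc, hee, one_mul]
      _ ≤ _ := by gcongr
  have hIntg : ∀ t ∈ Icc (0:ℝ) T, ∫⁻ s in Ioc 0 t, ENNReal.ofReal (Real.exp (κ * s)) ≤
      ENNReal.ofReal (κ⁻¹ * Real.exp (κ * t)) := by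
    intro t ht
    have hc : Continuous fun s : ℝ => Real.exp (κ * s) := by fun_prop
    rw [← ofReal_integral_eq_lintegral_ofReal
      ((hc.continuousOn.integrableOn_compact isCompact_Icc).mono_set Ioc_subset_Icc_self)
      (ae_of_all _ fun s => (Real.exp_pos _).le), ← intervalIntegral.integral_of_le ht.1]
    apply ENNReal.ofReal_le_ofReal
    rw [intervalIntegral.integral_comp_mul_left (fun x => Real.exp x) hκ0.ne', integral_exp,
      smul_eq_mul]
    gcongr
    have := Real.exp_pos (κ * 0)
    linarith
  have hCκ : C * ENNReal.ofReal κ⁻¹ ≤ 2⁻¹ := by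
    rw [← ENNReal.ofReal_toReal hC, ← ENNReal.ofReal_mul ENNReal.toReal_nonneg,
      show (2⁻¹ : ℝ≥0∞) = ENNReal.ofReal 2⁻¹ by rw [ENNReal.ofReal_inv_of_pos two_pos]; simp]
    apply ENNReal.ofReal_le_ofReal
    have := ENNReal.toReal_nonneg (a := C)
    rw [hκ, mul_inv]
    rw [mul_left_comm]
    have : C.toReal * (C.toReal + 1)⁻¹ ≤ 1 := by
      rw [mul_inv_le_iff₀ (by positivity)]; linarith
    linarith
  have hS2 : S ≤ A + 2⁻¹ * S := by
    refine iSup₂_le fun t ht => ?_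
    have hle1 : ENNReal.ofReal (Real.exp (-(κ * t))) ≤ 1 := by
      rw [← ENNReal.ofReal_one]
      apply ENNReal.ofReal_le_ofReal
      rw [Real.exp_le_one_iff]
      have := mul_nonneg hκ0.le ht.1
      linarith
    have h2 : ∫⁻ s in Ioc 0 t, Y s ≤ ENNReal.ofReal κ⁻¹ * ENNReal.ofReal (Real.exp (κ * t)) * S := by
      calc ∫⁻ s in Ioc 0 t, Y s ≤ ∫⁻ s in Ioc 0 t, ENNReal.ofReal (Real.exp (κ * s)) * S := by
            refine setLIntegral_mono' measurableSet_Ioc fun s hs => ?_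
            exact hYS s ⟨hs.1.le, hs.2.trans ht.2⟩
        _ = (∫⁻ s in Ioc 0 t, ENNReal.ofReal (Real.exp (κ * s))) * S := lintegral_mul_const' _ _ hSfin
        _ ≤ _ := by
            gcongr
            refine (hIntg t ht).trans_eq ?_
            rw [ENNReal.ofReal_mul (by positivity)]
    calc ENNReal.ofReal (Real.exp (-(κ * t))) * Y t
        ≤ ENNReal.ofReal (Real.exp (-(κ * t))) * (A + C *
          (ENNReal.ofReal κ⁻¹ * ENNReal.ofReal (Real.exp (κ * t)) * S)) := by
          gcongr
          exact (hY t ht).trans (by gcongr)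
      _ = ENNReal.ofReal (Real.exp (-(κ * t))) * A + (C * ENNReal.ofReal κ⁻¹) *
          (ENNReal.ofReal (Real.exp (κ * t)) * ENNReal.ofReal (Real.exp (-(κ * t)))) * S := by ring
      _ ≤ 1 * A + 2⁻¹ * 1 * S := by rw [hee]; gcongr
      _ = _ := by simp
  have hS3 : S ≤ 2 * A := by
    have e : S = 2⁻¹ * S + 2⁻¹ * S := by rw [← add_mul, ENNReal.inv_two_add_inv_two, one_mul]
    have hf : 2⁻¹ * S ≠ ∞ := ENNReal.mul_ne_top (by simp) hSfin
    have h4 : 2⁻¹ * S ≤ A := by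
      rw [e] at hS2
      rw [← e] at hS2
      have : 2⁻¹ * S + 2⁻¹ * S ≤ A + 2⁻¹ * S := by rw [← e]; exact hS2
      exact (ENNReal.add_le_add_iff_right hf).1 this
    calc S = 2⁻¹ * S + 2⁻¹ * S := e
      _ ≤ A + A := add_le_add h4 h4
      _ = 2 * A := (two_mul A).symm
  intro t ht
  calc Y t ≤ ENNReal.ofReal (Real.exp (κ * t)) * S := hYS t ht
    _ ≤ ENNReal.ofReal (Real.exp (κ * T)) * (2 * A) := by
        gcongr
        exact ht.2
    _ = _ := by ring

end NS2D

namespace NS2D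
open scoped ENNReal ComplexConjugate Topology

lemma EE_diff_lt {α : ℝ} {c : Coef} (h : FinH α c) {ε : ℝ} (hε : hN α c < ε) :
    EE α c ≤ ENNReal.ofReal (ε ^ 2) := by
  rw [EE_eq_hN h]
  apply ENNReal.ofReal_le_ofReal
  have : 0 ≤ hN α c := Real.sqrt_nonneg _
  gcongr

lemma finH_sub {α : ℝ} {c d : Coef} (hc : FinH α c) (hd : FinH α d) : FinH α (c - d) := by
  rw [finH_iff] at *
  exact ne_top_of_le_ne_top (by finiteness) (EE_sub α c d)

lemma cont_of_ContH {α T : ℝ} (hα : 0 ≤ α) {u : ℝ → Coef} (h : ContH α T u)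
    (hf : ∀ t ∈ Icc (0:ℝ) T, FinH α (u t)) (k : Freq) :
    ContinuousOn (fun t => u t k) (Icc 0 T) := by
  rw [Metric.continuousOn_iff]
  intro t ht ε hε
  obtain ⟨δ, hδ, hd⟩ := h t ht (ε / 2) (half_pos hε)
  refine ⟨δ, hδ, fun s hs hst => ?_⟩
  have h1 := EE_diff_lt (finH_sub (hf s hs) (hf t ht)) (hd s hs hst)
  have h2 := (mode_le_EE α (u s - u t) k).trans h1
  have h3 : ‖(u s - u t) k‖ₑ ^ 2 ≤ ENNReal.ofReal ((ε / 2) ^ 2) := by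
    refine le_trans ?_ h2
    have : 1 ≤ wt α k := by rw [← wt_zero k]; exact wt_mono hα k
    calc _ = 1 * ‖(u s - u t) k‖ₑ ^ 2 := (one_mul _).symm
      _ ≤ _ := by gcongr
  rw [← ofReal_norm, ← ENNReal.ofReal_pow (norm_nonneg _), ENNReal.ofReal_le_ofReal_iff (by positivity)] at h3
  have h4 : ‖(u s - u t) k‖ ≤ ε / 2 := (pow_le_pow_iff_left₀ (norm_nonneg _) (by positivity) two_ne_zero).1 h3
  rw [dist_eq_norm]
  have : (u s - u t) k = u s k - u t k := rfl
  rw [← this]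
  linarith

lemma bdd_of_ContH {α T : ℝ} {u : ℝ → Coef} (h : ContH α T u)
    (hf : ∀ t ∈ Icc (0:ℝ) T, FinH α (u t)) :
    ∃ B : ℝ≥0∞, B ≠ ∞ ∧ ∀ t ∈ Icc (0:ℝ) T, EE α (u t) ≤ B := by
  refine isCompact_Icc.induction_on (p := fun s => ∃ B : ℝ≥0∞, B ≠ ∞ ∧ ∀ t ∈ s, EE α (u t) ≤ B)
    ⟨0, by simp, by simp⟩ ?_ ?_ ?_
  · rintro s t hst ⟨B, hB, hh⟩
    exact ⟨B, hB, fun x hx => hh x (hst hx)⟩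
  · rintro s t ⟨B, hB, hh⟩ ⟨B', hB', hh'⟩
    refine ⟨B + B', by finiteness, fun x hx => ?_⟩
    rcases hx with hx | hx
    · exact (hh x hx).trans le_self_add
    · exact (hh' x hx).trans le_add_self
  · intro t ht
    obtain ⟨δ, hδ, hd⟩ := h t ht 1 one_pos
    refine ⟨Metric.ball t δ ∩ Icc 0 T, ?_, 2 * ENNReal.ofReal (1 ^ 2) + 2 * EE α (u t), ?_, ?_⟩
    · rw [inter_comm]
      exact inter_mem_nhdsWithin _ (Metric.ball_mem_nhds t hδ)
    · have := (finH_iff _ _).1 (hf t ht)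
      finiteness
    · rintro s ⟨hs1, hs2⟩
      have h1 := EE_diff_lt (finH_sub (hf s hs2) (hf t ht)) (hd s hs2 hs1)
      calc EE α (u s) = EE α ((u s - u t) + u t) := by rw [sub_add_cancel]
        _ ≤ _ := EE_add _ _ _
        _ ≤ _ := by gcongr

lemma lint_of_MemL2H {α T : ℝ} {u : ℝ → Coef} (h : MemL2H α T u) :
    ∫⁻ t in Ioc 0 T, EE α (u t) ≠ ∞ := by
  have h1 : ∫⁻ t in Ioc 0 T, EE α (u t) = ∫⁻ t in Ioc 0 T, ENNReal.ofReal (hSq α (u t)) :=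
    setLIntegral_congr_fun measurableSet_Ioc fun t ht => EE_eq_ofReal (h.1 t ht).2
  rw [h1]
  exact h.2.lintegral_lt_top.ne

lemma finH_mono {p q : ℝ} (h : p ≤ q) {c : Coef} (hc : FinH q c) : FinH p c := by
  rw [finH_iff] at *
  exact ne_top_of_le_ne_top hc (EE_mono h c)

/-- Regularity of the trajectory at level `σ`. -/
def Reg (T : ℝ) (u : ℝ → Coef) (σ : ℝ) : Prop :=
  ∃ B : ℝ≥0∞, B ≠ ∞ ∧ (∀ t ∈ Icc (0:ℝ) T, EE σ (u t) ≤ B) ∧ ∫⁻ t in Ioc 0 T, EE (σ + 1) (u t) ≤ B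

lemma ns_par {ν T b : ℝ} {θ f : Coef} {u : ℝ → Coef} (hb : 1 ≤ b) (hθ : MemH b θ)
    (hu : IsNSSol ν f T θ u) :
    Par ν T u (fun t => f - Bc (u t) (u t)) ∧ Reg T u 1 := by
  have hf : ∀ t ∈ Icc (0:ℝ) T, FinH 1 (u t) := by
    intro t ht
    rcases ht.1.eq_or_lt with h0 | h0
    · rw [← h0, hu.init]; exact finH_mono hb hθ.2
    · exact finH_mono (by norm_num) (hu.memL2H2.1 t ⟨h0, ht.2⟩).2
  refine ⟨⟨cont_of_ContH zero_le_one hu.contH1 hf, fun k t ht => ?_⟩, ?_⟩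
  · refine (hu.deriv k t ht).congr_deriv ?_
    simp only [Pi.sub_apply]; ring
  · obtain ⟨B, hB, hh⟩ := bdd_of_ContH hu.contH1 hf
    have h2 := lint_of_MemL2H hu.memL2H2
    refine ⟨B + ∫⁻ t in Ioc 0 T, EE 2 (u t), by finiteness, fun t ht => (hh t ht).trans le_self_add, ?_⟩
    rw [one_add_one_eq_two]
    exact le_add_self

lemma reg_step {ν T b σ : ℝ} (hν : 0 < ν) (hT : 0 < T) {θ f : Coef} {u : ℝ → Coef} (hθ : MemH b θ)
    (hf : MemH (b - 1) f) (h0 : u 0 = θ)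
    (hp : Par ν T u (fun t => f - Bc (u t) (u t))) (h1 : 1 ≤ σ) (hσ : σ + 1 / 2 ≤ b)
    (hr : Reg T u σ) : Reg T u (σ + 1 / 2) := by
  obtain ⟨B, hB, hB1, hB2⟩ := hr
  set τ := σ + 1 / 2 with hτ
  set Q : ℝ≥0∞ := (2 * ENNReal.ofReal (4 ^ ((σ + 1 / 2) / 2))) ^ 2 with hQ
  set D : ℝ≥0∞ := 2 * EE (b - 1) f * ENNReal.ofReal T + 2 * Q * (ZZ * B) * B with hD
  have hfin1 := (finH_iff _ _).1 hf.2
  have hfin2 := (finH_iff _ _).1 hθ.2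
  have hZ := ZZ_ne_top
  have hDf : D ≠ ∞ := by rw [hD, hQ]; finiteness
  have hN : ∀ t1 ∈ Icc (0:ℝ) T, ∫⁻ t in Ioc 0 t1, EE (τ - 1) (f - Bc (u t) (u t)) ≤ D := by
    intro t1 ht1
    calc ∫⁻ t in Ioc 0 t1, EE (τ - 1) (f - Bc (u t) (u t))
        ≤ ∫⁻ t in Ioc 0 T, EE (τ - 1) (f - Bc (u t) (u t)) :=
          lintegral_mono_set (Ioc_subset_Ioc_right ht1.2)
      _ ≤ ∫⁻ t in Ioc 0 T, (2 * EE (b - 1) f + 2 * Q * (ZZ * B) * EE (σ + 1) (u t)) := by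
          refine setLIntegral_mono' measurableSet_Ioc fun t ht => ?_
          have ht' : t ∈ Icc (0:ℝ) T := ⟨ht.1.le, ht.2⟩
          calc EE (τ - 1) (f - Bc (u t) (u t)) ≤ 2 * EE (τ - 1) f + 2 * EE (τ - 1) (Bc (u t) (u t)) :=
                EE_sub _ _ _
            _ ≤ 2 * EE (b - 1) f + 2 * (Q * ((L1 (-1 / 4) (u t)) ^ 2 * EE (σ + 1) (u t))) := by
                gcongr
                · exact EE_mono (by linarith) f
                · exact EE_Bc_self (by linarith) (u t)
            _ ≤ 2 * EE (b - 1) f + 2 * (Q * ((ZZ * B) * EE (σ + 1) (u t))) := by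
                gcongr
                refine (L1_sq_le _ _).trans ?_
                gcongr
                exact (EE_mono (by linarith) _).trans (hB1 t ht')
            _ = _ := by ring
      _ = 2 * EE (b - 1) f * ENNReal.ofReal T + 2 * Q * (ZZ * B) * ∫⁻ t in Ioc 0 T, EE (σ + 1) (u t) := by
          rw [lintegral_add_left measurable_const,
            lintegral_const_mul' (2 * Q * (ZZ * B)) _ (by rw [hQ]; finiteness), setLIntegral_const,
            Real.volume_Ioc, sub_zero]
      _ ≤ D := by rw [hD]; gcongr
  set F : ℝ≥0∞ := EE b θ + ENNReal.ofReal ν⁻¹ * D with hF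
  have hFf : F ≠ ∞ := by rw [hF]; finiteness
  have hmain : ∀ t1 ∈ Icc (0:ℝ) T,
      EE τ (u t1) + ENNReal.ofReal ν * ∫⁻ t in Ioc 0 t1, EE (τ + 1) (u t) ≤ F := by
    intro t1 ht1
    refine (hp.energy hν τ le_rfl ht1.1 ht1.2).trans ?_
    rw [h0, hF]
    gcongr
    · exact EE_mono hσ θ
    · exact hN t1 ht1
  have hνne : ENNReal.ofReal ν ≠ 0 := by simpa using hν
  refine ⟨F + (ENNReal.ofReal ν)⁻¹ * F, ?_, fun t ht => ?_, ?_⟩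
  · have : (ENNReal.ofReal ν)⁻¹ ≠ ∞ := ENNReal.inv_ne_top.2 hνne
    finiteness
  · exact (le_self_add.trans (hmain t ht)).trans le_self_add
  · have := le_add_self.trans (hmain T ⟨hT.le, le_rfl⟩)
    refine le_trans ?_ le_add_self
    rw [← ENNReal.div_eq_inv_mul, ENNReal.le_div_iff_mul_le (Or.inl hνne) (Or.inl ENNReal.ofReal_ne_top), mul_comm]
    exact this

lemma u_L1 {ν T : ℝ} (hν : 0 < ν) (hT : 0 < T) {a : ℤ} (ha : -1 ≤ a) {θ f : Coef} {u : ℝ → Coef}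
    (hθ : MemH ((a : ℝ) + 4) θ) (hf : MemH ((a : ℝ) + 4 - 1) f) (hu : IsNSSol ν f T θ u) :
    ∃ K : ℝ≥0∞, K ≠ ∞ ∧ ∀ t ∈ Icc (0:ℝ) T, (L1 (((a : ℝ) + 5 / 2) / 2) (u t)) ^ 2 ≤ K := by
  have haR : (-1 : ℝ) ≤ a := by exact_mod_cast ha
  obtain ⟨hp, hr⟩ := ns_par (by linarith) hθ hu
  have hall : ∀ j : ℕ, (1 : ℝ) + j / 2 ≤ (a : ℝ) + 4 → Reg T u (1 + j / 2) := by
    intro j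
    induction j with
    | zero => intro _; simpa using hr
    | succ j ih =>
      intro hj
      push_cast at hj
      have h1 := ih (by linarith)
      have h2 := reg_step hν hT hθ hf hu.init hp (σ := 1 + j / 2) (by
        have : (0:ℝ) ≤ j := Nat.cast_nonneg j
        linarith) (by linarith) h1
      convert h2 using 1
      push_cast; ring
  obtain ⟨n, hn⟩ := Int.eq_ofNat_of_zero_le (a := 2 * (a + 3)) (by omega)
  have hn' : (n : ℝ) = 2 * ((a : ℝ) + 3) := by
    have : ((n : ℤ) : ℝ) = ((2 * (a + 3) : ℤ) : ℝ) := by rw [hn]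
    push_cast at this
    exact this
  obtain ⟨B, hB, hB1, -⟩ := hall n (by rw [hn']; linarith)
  refine ⟨ZZ * B, ENNReal.mul_ne_top ZZ_ne_top hB, fun t ht => ?_⟩
  refine (L1_sq_le _ _).trans ?_
  gcongr
  refine le_trans (le_of_eq ?_) (hB1 t ht)
  congr 1
  rw [hn']; ring

/-- Data of a solution of the linearised equation. -/
structure Lin (ν T R : ℝ) (C0 : ℝ≥0∞) (ξ : Coef) (W N : ℝ → Coef) : Prop where
  par : Par ν T W N
  init : W 0 = ξ
  fin1 : ∫⁻ t in Ioc 0 T, EE 1 (W t) ≠ ∞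
  smooth : ∀ σ, EE σ ξ ≠ ∞
  bd : ∀ σ, |σ| ≤ R → ∀ t ∈ Ioc 0 T, EE (σ - 1) (N t) ≤ C0 * EE σ (W t)

lemma lin_of {ν T R : ℝ} {K : ℝ≥0∞} {u : ℝ → Coef}
    (hK : ∀ t ∈ Icc (0:ℝ) T, (L1 (R / 2) (u t)) ^ 2 ≤ K) {ξ : Coef} (hξ : MemHinf ξ) {W : ℝ → Coef}
    (h : IsLinSol ν u T ξ W ∧ ContH 0 T W ∧ MemL2H 1 T W) :
    Lin ν T R (4 * K) ξ W (fun t => - Bc (u t) (W t) - Bc (W t) (u t)) := by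
  obtain ⟨hs, hc, hm⟩ := h
  have hf : ∀ t ∈ Icc (0:ℝ) T, FinH 0 (W t) := by
    intro t ht
    rcases ht.1.eq_or_lt with h0 | h0
    · rw [← h0, hs.init]; exact (hξ 0).2
    · exact finH_mono (by norm_num) (hm.1 t ⟨h0, ht.2⟩).2
  refine ⟨⟨cont_of_ContH le_rfl hc hf, fun k t ht => ?_⟩, hs.init, lint_of_MemL2H hm,
    fun σ => (finH_iff _ _).1 (hξ σ).2, fun σ hσ t ht => ?_⟩
  · refine (hs.deriv k t ht).congr_deriv ?_
    simp only [Pi.sub_apply, Pi.neg_apply, Pi.zero_apply]; ring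
  · have hL : (L1 |σ / 2| (u t)) ^ 2 ≤ K := by
      refine le_trans ?_ (hK t ⟨ht.1.le, ht.2⟩)
      gcongr
      apply L1_mono
      rw [abs_div, abs_two]; linarith
    calc _ ≤ 2 * EE (σ - 1) (- Bc (u t) (W t)) + 2 * EE (σ - 1) (Bc (W t) (u t)) := EE_sub _ _ _
      _ ≤ 2 * (K * EE σ (W t)) + 2 * (K * EE σ (W t)) := by
          rw [EE_neg]
          gcongr
          · exact (EE_Bc_left _ _ _).trans (by gcongr)
          · exact (EE_Bc_right _ _ _).trans (by gcongr)
      _ = _ := by ring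

end NS2D

namespace NS2D
open scoped ENNReal ComplexConjugate

lemma Lin.bddInt {ν T R : ℝ} {C0 : ℝ≥0∞} {ξ : Coef} {W N : ℝ → Coef} (h : Lin ν T R C0 ξ W N)
    {σ : ℝ} (hσ : |σ| ≤ R) {t0 t1 : ℝ} (h0 : 0 ≤ t0) (h1 : t1 ≤ T) :
    ∫⁻ t in Ioc t0 t1, EE (σ - 1) (N t) ≤ C0 * ∫⁻ t in Ioc t0 t1, EE σ (W t) := by
  refine (setLIntegral_mono' measurableSet_Ioc fun t ht =>
    h.bd σ hσ t ⟨h0.trans_lt ht.1, ht.2.trans h1⟩).trans ?_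
  rw [Par.lint_EE (fun k => h.par.measW k h0 h1)]
  have : ∀ t, C0 * EE σ (W t) = ∑' k, C0 * (wt σ k * ‖W t k‖ₑ ^ 2) := fun t => by
    rw [EE, ENNReal.tsum_mul_left]
  simp only [this]
  rw [lintegral_tsum fun k => (((h.par.measW k h0 h1).enorm.pow_const 2).const_mul _).const_mul _,
    ← ENNReal.tsum_mul_left]
  refine ENNReal.tsum_le_tsum fun k => ?_
  have hm : AEMeasurable (fun t => ‖W t k‖ₑ ^ 2) (volume.restrict (Ioc t0 t1)) :=
    (h.par.measW k h0 h1).enorm.pow_const 2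
  rw [lintegral_const_mul'' _ (hm.const_mul _), lintegral_const_mul'' _ hm]

lemma Lin.energy {ν T R : ℝ} {C0 : ℝ≥0∞} {ξ : Coef} {W N : ℝ → Coef} (h : Lin ν T R C0 ξ W N)
    (hν : 0 < ν) {σ : ℝ} (hσ : |σ| ≤ R) {t0 t1 : ℝ} (h0 : 0 ≤ t0) (h01 : t0 ≤ t1) (h1 : t1 ≤ T) :
    EE σ (W t1) + ENNReal.ofReal ν * ∫⁻ t in Ioc t0 t1, EE (σ + 1) (W t) ≤
      EE σ (W t0) + ENNReal.ofReal ν⁻¹ * C0 * ∫⁻ t in Ioc t0 t1, EE σ (W t) := by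
  refine (h.par.energy hν σ h0 h01 h1).trans ?_
  rw [mul_assoc _ C0]
  gcongr _ + _ * ?_
  exact h.bddInt hσ h0 h1

lemma lint_sub_le {T : ℝ} (Y : ℝ → ℝ≥0∞) {t0 t1 : ℝ} (h0 : 0 ≤ t0) (h1 : t1 ≤ T) :
    ∫⁻ t in Ioc t0 t1, Y t ≤ ∫⁻ t in Ioc 0 T, Y t :=
  lintegral_mono_set (Ioc_subset_Ioc h0 h1)

lemma Lin.bd0 {ν T R : ℝ} {C0 : ℝ≥0∞} {ξ : Coef} {W N : ℝ → Coef} (h : Lin ν T R C0 ξ W N)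
    (hν : 0 < ν) (hR : 0 ≤ R) (hC : C0 ≠ ∞) :
    ∃ B : ℝ≥0∞, B ≠ ∞ ∧ ∀ t ∈ Icc 0 T, EE 0 (W t) ≤ B := by
  have hf := h.fin1
  have hs := h.smooth 0
  refine ⟨EE 0 ξ + ENNReal.ofReal ν⁻¹ * C0 * ∫⁻ t in Ioc 0 T, EE 1 (W t), by finiteness, fun t ht => ?_⟩
  have := h.energy hν (σ := 0) (by simpa using hR) le_rfl ht.1 ht.2
  rw [h.init] at this
  refine (le_self_add.trans this).trans ?_
  gcongr _ + _ * ?_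
  exact (lint_sub_le _ le_rfl ht.2).trans (lintegral_mono fun t => EE_mono (by norm_num) _)

lemma of_nu_mul_le {ν : ℝ} (hν : 0 < ν) {x y : ℝ≥0∞} (h : ENNReal.ofReal ν * x ≤ y) :
    x ≤ ENNReal.ofReal ν⁻¹ * y := by
  have : ENNReal.ofReal ν⁻¹ * (ENNReal.ofReal ν * x) = x := by
    rw [← mul_assoc, ← ENNReal.ofReal_mul (by positivity), inv_mul_cancel₀ hν.ne']; simp
  rw [← this]; gcongr

/-- control at level `σ` -/
def Ctl (ν T R : ℝ) (C0 : ℝ≥0∞) (σ : ℝ) : Prop :=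
  ∃ C : ℝ≥0∞, C ≠ ∞ ∧ ∀ ξ W N, Lin ν T R C0 ξ W N →
    (∀ t ∈ Icc 0 T, EE σ (W t) ≤ C * EE σ ξ) ∧ ∫⁻ t in Ioc 0 T, EE (σ + 1) (W t) ≤ C * EE σ ξ

lemma ctl_low {ν T R : ℝ} {C0 : ℝ≥0∞} (hν : 0 < ν) (hT : 0 < T) (hC : C0 ≠ ∞) {σ : ℝ}
    (hσ : |σ| ≤ R) (h0 : σ ≤ 0) : Ctl ν T R C0 σ := by
  obtain ⟨K, hK, hG⟩ := gronwall T (C := ENNReal.ofReal ν⁻¹ * C0) (by finiteness)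
  refine ⟨K + ENNReal.ofReal ν⁻¹ * (1 + ENNReal.ofReal ν⁻¹ * C0 * (K * ENNReal.ofReal T)),
    by finiteness, fun ξ W N h => ?_⟩
  obtain ⟨B, hB, hBB⟩ := h.bd0 hν ((abs_nonneg σ).trans hσ) hC
  have h1 : ∀ t ∈ Icc 0 T, EE σ (W t) ≤ K * EE σ ξ := by
    refine hG _ B (fun t => EE σ (W t)) hB (fun t ht => (EE_mono h0 _).trans (hBB t ht)) fun t ht => ?_
    have := h.energy hν hσ le_rfl ht.1 ht.2
    rw [h.init] at this
    exact le_self_add.trans this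
  refine ⟨fun t ht => (h1 t ht).trans (by gcongr; exact le_self_add), ?_⟩
  have := h.energy hν hσ le_rfl hT.le le_rfl
  rw [h.init] at this
  have := of_nu_mul_le hν (le_add_self.trans this)
  refine this.trans ?_
  rw [add_mul]
  refine le_trans ?_ le_add_self
  have e : ENNReal.ofReal ν⁻¹ * (1 + ENNReal.ofReal ν⁻¹ * C0 * (K * ENNReal.ofReal T)) * EE σ ξ
      = ENNReal.ofReal ν⁻¹ * (EE σ ξ + ENNReal.ofReal ν⁻¹ * C0 * (K * EE σ ξ * ENNReal.ofReal T)) := by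
    ring
  rw [e]
  gcongr _ * (_ + _ * ?_)
  calc _ ≤ ∫⁻ t in Ioc 0 T, K * EE σ ξ :=
        setLIntegral_mono' measurableSet_Ioc fun t ht => h1 t ⟨ht.1.le, ht.2⟩
    _ = _ := by simp

lemma ctl_step {ν T R : ℝ} {C0 : ℝ≥0∞} (hν : 0 < ν) (hT : 0 < T) (hC : C0 ≠ ∞) {σ : ℝ}
    (hσ : |σ + 1| ≤ R) (h0 : Ctl ν T R C0 σ) : Ctl ν T R C0 (σ + 1) := by
  obtain ⟨K, hK, hG⟩ := h0
  set D := 1 + ENNReal.ofReal ν⁻¹ * C0 * K with hD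
  refine ⟨D + ENNReal.ofReal ν⁻¹ * D, by finiteness, fun ξ W N h => ?_⟩
  obtain ⟨g1, g2⟩ := hG ξ W N h
  have key : ∀ t ∈ Icc 0 T, EE (σ + 1) (W t) + ENNReal.ofReal ν * ∫⁻ t in Ioc 0 t, EE (σ + 1 + 1) (W t)
      ≤ D * EE (σ + 1) ξ := by
    intro t ht
    have := h.energy hν hσ le_rfl ht.1 ht.2
    rw [h.init] at this
    refine this.trans ?_
    rw [hD, add_mul, one_mul, mul_assoc _ K]
    gcongr
    exact (lint_sub_le _ le_rfl ht.2).trans (g2.trans (by gcongr; exact EE_mono (by linarith) _))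
  refine ⟨fun t ht => (le_self_add.trans (key t ht)).trans (by gcongr; exact le_self_add), ?_⟩
  refine (of_nu_mul_le hν (le_add_self.trans (key T ⟨hT.le, le_rfl⟩))).trans ?_
  rw [← mul_assoc]
  gcongr
  exact le_add_self

lemma ctl_nat {ν T R : ℝ} {C0 : ℝ≥0∞} (hν : 0 < ν) (hT : 0 < T) (hC : C0 ≠ ∞) (hR : 1 ≤ R) (n : ℕ)
    (hn : (n : ℝ) - 1 ≤ R) : Ctl ν T R C0 ((n : ℝ) - 1) := by
  induction n with
  | zero => exact ctl_low hν hT hC (by simpa using hR) (by norm_num)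
  | succ n ih =>
    have e : ((n + 1 : ℕ) : ℝ) - 1 = ((n : ℝ) - 1) + 1 := by push_cast; ring
    rw [e] at hn ⊢
    refine ctl_step hν hT hC ?_ (ih (by linarith))
    rw [abs_of_nonneg (by have : (0:ℝ) ≤ n := n.cast_nonneg
                          linarith)]
    exact hn

/-- Smoothing at time `T`. -/
lemma lin_smooth {ν T R : ℝ} {C0 : ℝ≥0∞} (hν : 0 < ν) (hT : 0 < T) (hC : C0 ≠ ∞) {r : ℝ}
    (hr1 : |r + 1| ≤ R) (h0 : Ctl ν T R C0 r) :
    ∃ C : ℝ≥0∞, C ≠ ∞ ∧ ∀ ξ W N, Lin ν T R C0 ξ W N → EE (r + 1) (W T) ≤ C * EE r ξ := by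
  obtain ⟨K, hK, hG⟩ := h0
  refine ⟨ENNReal.ofReal T⁻¹ * (K + ENNReal.ofReal T * (ENNReal.ofReal ν⁻¹ * C0 * K)), by finiteness, fun ξ W N h => ?_⟩
  obtain ⟨-, g2⟩ := hG ξ W N h
  rw [mul_assoc]
  apply of_nu_mul_le hT
  have key : ∀ t ∈ Ioc 0 T, EE (r + 1) (W T) ≤ EE (r + 1) (W t) +
      ENNReal.ofReal ν⁻¹ * C0 * (K * EE r ξ) := by
    intro t ht
    refine (le_self_add.trans (h.energy hν hr1 ht.1.le ht.2 le_rfl)).trans ?_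
    gcongr
    exact (lint_sub_le _ ht.1.le le_rfl).trans g2
  calc ENNReal.ofReal T * EE (r + 1) (W T) = ∫⁻ t in Ioc 0 T, EE (r + 1) (W T) := by simp; ring
    _ ≤ ∫⁻ t in Ioc 0 T, (EE (r + 1) (W t) + ENNReal.ofReal ν⁻¹ * C0 * (K * EE r ξ)) :=
        setLIntegral_mono' measurableSet_Ioc key
    _ = (∫⁻ t in Ioc 0 T, EE (r + 1) (W t)) + ENNReal.ofReal T * (ENNReal.ofReal ν⁻¹ * C0 * (K * EE r ξ)) := by
        rw [lintegral_add_right _ measurable_const]; simp; ring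
    _ ≤ K * EE r ξ + ENNReal.ofReal T * (ENNReal.ofReal ν⁻¹ * C0 * (K * EE r ξ)) := by gcongr
    _ = _ := by ring

/-- Coercivity. -/
lemma lin_coer {ν T R : ℝ} {C0 : ℝ≥0∞} (hν : 0 < ν) (hT : 0 < T) (hC : C0 ≠ ∞) (hR : 1 ≤ R) :
    ∃ C : ℝ≥0∞, C ≠ ∞ ∧ ∀ ξ W N, Lin ν T R C0 ξ W N →
      EE (-1) ξ ≤ C * ∫⁻ t in Ioc 0 T, EE 0 (W t) := by
  refine ⟨ENNReal.ofReal T⁻¹ * (1 + ENNReal.ofReal T * (3 * ENNReal.ofReal ν + ENNReal.ofReal ν⁻¹ * C0)), by finiteness, fun ξ W N h => ?_⟩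
  set Q := ∫⁻ t in Ioc 0 T, EE 0 (W t)
  rw [mul_assoc]
  apply of_nu_mul_le hT
  have hm : ∫⁻ t in Ioc 0 T, EE (-1) (W t) ≤ Q := lintegral_mono fun t => EE_mono (by norm_num) _
  have key : ∀ t ∈ Ioc 0 T, EE (-1) ξ ≤ EE (-1) (W t) +
      (3 * ENNReal.ofReal ν + ENNReal.ofReal ν⁻¹ * C0) * Q := by
    intro t ht
    have := h.par.energy_rev hν (-1) le_rfl ht.1.le ht.2
    rw [h.init] at this
    refine this.trans ?_
    rw [add_assoc, add_mul, mul_assoc _ C0]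
    gcongr
    · exact (lint_sub_le _ le_rfl ht.2).trans (by norm_num; exact le_rfl)
    · refine (h.bddInt (by simpa using hR) le_rfl ht.2).trans ?_
      gcongr
      exact (lint_sub_le _ le_rfl ht.2).trans hm
  calc ENNReal.ofReal T * EE (-1) ξ = ∫⁻ t in Ioc 0 T, EE (-1) ξ := by simp; ring
    _ ≤ ∫⁻ t in Ioc 0 T, (EE (-1) (W t) + (3 * ENNReal.ofReal ν + ENNReal.ofReal ν⁻¹ * C0) * Q) :=
        setLIntegral_mono' measurableSet_Ioc key
    _ = (∫⁻ t in Ioc 0 T, EE (-1) (W t)) + ENNReal.ofReal T * ((3 * ENNReal.ofReal ν + ENNReal.ofReal ν⁻¹ * C0) * Q) := by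
        rw [lintegral_add_right _ measurable_const]; simp; ring
    _ ≤ Q + ENNReal.ofReal T * ((3 * ENNReal.ofReal ν + ENNReal.ofReal ν⁻¹ * C0) * Q) := by gcongr
    _ = _ := by ring

end NS2D

namespace NS2D
open scoped ENNReal ComplexConjugate

lemma amgm {p q : ℝ} (h : -2 ≤ p + q) (k : Freq) (x y : ℝ≥0∞) :
    wt (-1) k * (x * y) ≤ wt p k * x ^ 2 + wt q k * y ^ 2 := by
  have h1 := ennreal_two_mul_le (wt (p / 2) k * x) (wt (q / 2) k * y)
  rw [mul_pow, mul_pow, wt_sq, wt_sq, mul_div_cancel₀ _ two_ne_zero, mul_div_cancel₀ _ two_ne_zero] at h1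
  refine le_trans ?_ h1
  have e : wt (p / 2) k * x * (wt (q / 2) k * y) = wt ((p + q) / 2) k * (x * y) := by
    rw [add_div, ← wt_mul]; ring
  rw [e]
  calc wt (-1) k * (x * y) ≤ 1 * (wt ((p + q) / 2) k * (x * y)) := by
        rw [one_mul]; gcongr; exact wt_mono (by linarith) k
    _ ≤ _ := by gcongr; norm_num

lemma amgm0 (x y : ℝ≥0∞) : x * y ≤ x ^ 2 + y ^ 2 := by
  refine le_trans ?_ (ennreal_two_mul_le x y)
  calc x * y = 1 * (x * y) := (one_mul _).symm
    _ ≤ _ := by gcongr; norm_num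

lemma enorm_conj (z : ℂ) : ‖conj z‖ₑ = ‖z‖ₑ := by
  rw [← ofReal_norm, ← ofReal_norm, RCLike.norm_conj]

lemma wt_neg_one (k : Freq) : ‖(((lam k)⁻¹ : ℝ) : ℂ)‖ₑ = wt (-1) k := by
  rw [← ofReal_norm, Complex.norm_real, Real.norm_of_nonneg (inv_nonneg.2 (lam_pos k).le), wt,
    Real.rpow_neg_one]

lemma wt_neg_le (k : Freq) : wt (-1) k ≤ 1 := by
  rw [← wt_zero k]; exact wt_mono (by norm_num) k

lemma lint_mode {X : ℝ → Coef} {t0 t1 : ℝ}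
    (hX : ∀ k, AEStronglyMeasurable (fun t => X t k) (volume.restrict (Ioc t0 t1))) {σ : ℝ}
    (h : ∫⁻ t in Ioc t0 t1, EE σ (X t) ≠ ∞) (k : Freq) :
    ∫⁻ t in Ioc t0 t1, ‖X t k‖ₑ ^ 2 ≠ ∞ := by
  rw [Par.lint_EE hX] at h
  have := ENNReal.ne_top_of_tsum_ne_top h k
  intro h2
  rw [h2] at this
  exact this (ENNReal.mul_top (wt_pos σ k))

lemma Lin.fin0 {ν T R : ℝ} {C0 : ℝ≥0∞} {ξ : Coef} {W N : ℝ → Coef} (h : Lin ν T R C0 ξ W N) :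
    ∫⁻ t in Ioc 0 T, EE 0 (W t) ≠ ∞ :=
  ne_top_of_le_ne_top h.fin1 (lintegral_mono fun t => EE_mono (by norm_num) _)

lemma Lin.integN {ν T R : ℝ} {C0 : ℝ≥0∞} {ξ : Coef} {W N : ℝ → Coef} (h : Lin ν T R C0 ξ W N)
    (hC : C0 ≠ ∞) (hR : 0 ≤ R) (k : Freq) : IntegrableOn (fun t => N t k) (Ioc 0 T) := by
  refine (sq_integrable_of (h.par.measN k le_rfl le_rfl) ?_).1
  refine lint_mode (fun k => h.par.measN k le_rfl le_rfl) (σ := 0 - 1) ?_ k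
  have := h.fin0
  refine ne_top_of_le_ne_top ?_ (h.bddInt (σ := 0) (by simpa using hR) le_rfl le_rfl)
  finiteness

/-- the per-mode defect -/
def Dk (ν T : ℝ) (ξ g : Coef) (W V : ℝ → Coef) (k : Freq) : ℂ :=
  (((lam k)⁻¹ : ℝ) : ℂ) * (ξ k * conj (g k)) - 2 * (ν : ℂ) * ∫ t in Ioc 0 T, W t k * conj (V t k)

lemma Dk_le {ν T R : ℝ} {C0 : ℝ≥0∞} (hT : 0 < T) (hC : C0 ≠ ∞) (hR : 0 ≤ R)
    {ξ g : Coef} {W N V H : ℝ → Coef} (hW : Lin ν T R C0 ξ W N) (hV : Lin ν T R C0 g V H) (k : Freq) :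
    ‖Dk ν T ξ g W V k‖ₑ ≤ wt (-1) k * (‖W T k‖ₑ * ‖V T k‖ₑ) +
      (∫⁻ t in Ioc 0 T, wt (-1) k * (‖N t k‖ₑ * ‖V t k‖ₑ)) +
      ∫⁻ t in Ioc 0 T, wt (-1) k * (‖W t k‖ₑ * ‖H t k‖ₑ) := by
  obtain ⟨i1, i2, i3, e⟩ := scal_pair (μ := ν * lam k) hT.le (hW.par.cont k) (hV.par.cont k)
    (fun t ht => hW.par.der k t ⟨ht.1, ht.2.le⟩) (fun t ht => hV.par.der k t ⟨ht.1, ht.2.le⟩)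
    (hW.integN hC hR k) (hV.integN hC hR k)
  have hl : ((lam k : ℝ) : ℂ) ≠ 0 := by exact_mod_cast (lam_pos k).ne'
  have i12 : IntegrableOn (fun t => N t k * conj (V t k) + W t k * conj (H t k)) (Ioc 0 T) := i1.add i2
  rw [integral_sub i12 (i3.const_mul _), integral_add i1 i2, integral_const_mul, hW.init, hV.init] at e
  have e2 : Dk ν T ξ g W V k = (((lam k)⁻¹ : ℝ) : ℂ) * (W T k * conj (V T k)) -
      (((lam k)⁻¹ : ℝ) : ℂ) * (∫ t in Ioc 0 T, N t k * conj (V t k)) -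
      (((lam k)⁻¹ : ℝ) : ℂ) * (∫ t in Ioc 0 T, W t k * conj (H t k)) := by
    unfold Dk
    push_cast at e ⊢
    field_simp
    linear_combination e
  have aux : ∀ A B : ℝ → ℂ, ‖(((lam k)⁻¹ : ℝ) : ℂ) * (∫ t in Ioc 0 T, A t * conj (B t))‖ₑ ≤
      ∫⁻ t in Ioc 0 T, wt (-1) k * (‖A t‖ₑ * ‖B t‖ₑ) := by
    intro A B
    rw [enorm_mul, wt_neg_one, lintegral_const_mul' _ _ (wt_ne_top _ k)]
    gcongr
    refine (enorm_integral_le_lintegral_enorm _).trans_eq ?_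
    simp only [enorm_mul, enorm_conj]
  rw [e2]
  refine (enorm_sub_le).trans (add_le_add ((enorm_sub_le).trans (add_le_add ?_ (aux _ _))) (aux _ _))
  rw [enorm_mul, enorm_mul, wt_neg_one, enorm_conj]

lemma lint_pair {A B : ℝ → Coef} {T : ℝ}
    (hA : ∀ k, AEStronglyMeasurable (fun t => A t k) (volume.restrict (Ioc 0 T)))
    (hB : ∀ k, AEStronglyMeasurable (fun t => B t k) (volume.restrict (Ioc 0 T))) {p q : ℝ}
    (h : -2 ≤ p + q) :
    ∑' k, ∫⁻ t in Ioc 0 T, wt (-1) k * (‖A t k‖ₑ * ‖B t k‖ₑ) ≤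
      (∫⁻ t in Ioc 0 T, EE p (A t)) + ∫⁻ t in Ioc 0 T, EE q (B t) := by
  rw [Par.lint_EE hA, Par.lint_EE hB, ← ENNReal.tsum_add]
  refine ENNReal.tsum_le_tsum fun k => ?_
  have mA : AEMeasurable (fun t => ‖A t k‖ₑ ^ 2) (volume.restrict (Ioc 0 T)) := (hA k).enorm.pow_const 2
  rw [← lintegral_const_mul' _ _ (wt_ne_top _ k), ← lintegral_const_mul' _ _ (wt_ne_top _ k),
    ← lintegral_add_left' (mA.const_mul _)]
  exact lintegral_mono fun t => amgm h k _ _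

lemma pair_eq {ν T R : ℝ} {C0 : ℝ≥0∞} (ν' : ℝ)
    {ξ g : Coef} {W N V H : ℝ → Coef} (hW : Lin ν T R C0 ξ W N) (hV : Lin ν T R C0 g V H) :
    (∑' k, (((lam k)⁻¹ : ℝ) : ℂ) * (ξ k * conj (g k))) - 2 * (ν' : ℂ) * ∫ t in Ioc 0 T, innerC (W t) (V t)
      = ∑' k, Dk ν' T ξ g W V k := by
  have m : ∀ k, AEStronglyMeasurable (fun t => W t k * conj (V t k)) (volume.restrict (Ioc 0 T)) :=
    fun k => (hW.par.measW k le_rfl le_rfl).mul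
      (Complex.continuous_conj.comp_aestronglyMeasurable (hV.par.measW k le_rfl le_rfl))
  have fin : ∑' k, ∫⁻ t in Ioc 0 T, ‖W t k * conj (V t k)‖ₑ ≠ ∞ := by
    have f1 := hW.fin0
    have f2 := hV.fin0
    refine ne_top_of_le_ne_top (b := (∫⁻ t in Ioc 0 T, EE 0 (W t)) + ∫⁻ t in Ioc 0 T, EE 0 (V t)) (by finiteness) ?_
    rw [Par.lint_EE (fun k => hW.par.measW k le_rfl le_rfl), Par.lint_EE (fun k => hV.par.measW k le_rfl le_rfl),
      ← ENNReal.tsum_add]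
    refine ENNReal.tsum_le_tsum fun k => ?_
    have mA : AEMeasurable (fun t => ‖W t k‖ₑ ^ 2) (volume.restrict (Ioc 0 T)) :=
      (hW.par.measW k le_rfl le_rfl).enorm.pow_const 2
    rw [wt_zero, one_mul, one_mul, ← lintegral_add_left' mA]
    refine lintegral_mono fun t => ?_
    rw [enorm_mul, enorm_conj]
    exact amgm0 _ _
  have s1 : Summable fun k => (((lam k)⁻¹ : ℝ) : ℂ) * (ξ k * conj (g k)) := by
    apply Summable.of_enorm
    have f1 := hW.smooth 0
    have f2 := hV.smooth 0
    refine ne_top_of_le_ne_top (b := EE 0 ξ + EE 0 g) (by finiteness) ?_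
    rw [EE, EE, ← ENNReal.tsum_add]
    refine ENNReal.tsum_le_tsum fun k => ?_
    rw [enorm_mul, enorm_mul, wt_neg_one, enorm_conj]
    exact amgm (by norm_num) k _ _
  have s2 : Summable fun k => ∫ t in Ioc 0 T, W t k * conj (V t k) := by
    apply Summable.of_enorm
    exact ne_top_of_le_ne_top fin (ENNReal.tsum_le_tsum fun k => enorm_integral_le_lintegral_enorm _)
  unfold innerC
  rw [integral_tsum m fin, ← tsum_mul_left, ← s1.tsum_sub (s2.mul_left _)]
  rfl

/-- The remainder estimate. -/
lemma kbound {ν T R : ℝ} {C0 : ℝ≥0∞} (hν : 0 < ν) (hT : 0 < T) (hC : C0 ≠ ∞) {s r : ℝ}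
    (hrs : r = -s - 5 / 2) (hs1 : |s + 1| ≤ R) (hr1 : |r + 1| ≤ R)
    (hs : Ctl ν T R C0 s) (hr : Ctl ν T R C0 r) :
    ∃ C : ℝ≥0∞, C ≠ ∞ ∧ ∀ ξ W N g V H, Lin ν T R C0 ξ W N → Lin ν T R C0 g V H →
      ‖(∑' k, (((lam k)⁻¹ : ℝ) : ℂ) * (ξ k * conj (g k))) -
        2 * (ν : ℂ) * ∫ t in Ioc 0 T, innerC (W t) (V t)‖ₑ ≤ C * (EE s ξ + EE r g) := by
  obtain ⟨K1, hK1, h1⟩ := hs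
  obtain ⟨K3, hK3, h3⟩ := lin_smooth hν hT hC hr1 hr
  obtain ⟨K2, hK2, h2⟩ := hr
  refine ⟨(K1 + C0 * K1 + K1) + (K3 + K2 + C0 * K2), by finiteness, fun ξ W N g V H hW hV => ?_⟩
  obtain ⟨a1, a2⟩ := h1 _ _ _ hW
  obtain ⟨b1, b2⟩ := h2 _ _ _ hV
  have b3 := h3 _ _ _ hV
  rw [pair_eq ν hW hV]
  refine enorm_tsum_le_tsum_enorm.trans ((ENNReal.tsum_le_tsum fun k =>
    Dk_le hT hC ((abs_nonneg _).trans hs1) hW hV k).trans ?_)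
  rw [ENNReal.tsum_add, ENNReal.tsum_add]
  have mW := fun k => hW.par.measW k le_rfl (le_refl T)
  have mV := fun k => hV.par.measW k le_rfl (le_refl T)
  have mN := fun k => hW.par.measN k le_rfl (le_refl T)
  have mH := fun k => hV.par.measN k le_rfl (le_refl T)
  have c1 : ∑' k, wt (-1) k * (‖W T k‖ₑ * ‖V T k‖ₑ) ≤ K1 * EE s ξ + K3 * EE r g := by
    refine le_trans ?_ (add_le_add (a1 T ⟨hT.le, le_rfl⟩) b3)
    rw [EE, EE, ← ENNReal.tsum_add]
    exact ENNReal.tsum_le_tsum fun k => amgm (by linarith) k _ _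
  have c2 : ∑' k, ∫⁻ t in Ioc 0 T, wt (-1) k * (‖N t k‖ₑ * ‖V t k‖ₑ) ≤ C0 * (K1 * EE s ξ) + K2 * EE r g := by
    refine (lint_pair mN mV (p := s) (q := r + 1) (by linarith)).trans (add_le_add ?_ b2)
    have := hW.bddInt hs1 le_rfl (le_refl T)
    rw [add_sub_cancel_right] at this
    exact this.trans (by gcongr)
  have c3 : ∑' k, ∫⁻ t in Ioc 0 T, wt (-1) k * (‖W t k‖ₑ * ‖H t k‖ₑ) ≤ K1 * EE s ξ + C0 * (K2 * EE r g) := by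
    refine (lint_pair mW mH (p := s + 1) (q := r) (by linarith)).trans (add_le_add a2 ?_)
    have := hV.bddInt hr1 le_rfl (le_refl T)
    rw [add_sub_cancel_right] at this
    exact this.trans (by gcongr)
  refine (add_le_add (add_le_add c1 c2) c3).trans ?_
  calc _ = (K1 + C0 * K1 + K1) * EE s ξ + (K3 + K2 + C0 * K2) * EE r g := by ring
    _ ≤ ((K1 + C0 * K1 + K1) + (K3 + K2 + C0 * K2)) * EE s ξ +
        ((K1 + C0 * K1 + K1) + (K3 + K2 + C0 * K2)) * EE r g := by
        exact add_le_add (mul_le_mul_left le_self_add _) (mul_le_mul_left le_add_self _)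
    _ = _ := by ring

end NS2D

namespace NS2D
open scoped ENNReal ComplexConjugate Topology
open Filter

lemma finite_lam (N : ℝ) : {k : Freq | lam k ≤ N}.Finite := by
  rcases le_or_gt N 0 with hN | hN
  · convert Set.finite_empty
    ext k; simp only [mem_ofPred_eq, mem_empty_iff_false, iff_false, not_le]
    exact hN.trans_lt (lam_pos k)
  have h := summable_lam.tendsto_cofinite_zero
  have h2 := h.eventually (gt_mem_nhds (show (0:ℝ) < N ^ (-3 / 2 : ℝ) by positivity))
  rw [Filter.eventually_cofinite] at h2
  refine h2.subset fun k hk => ?_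
  simp only [mem_ofPred_eq, not_lt] at hk ⊢
  exact Real.rpow_le_rpow_of_nonpos (lam_pos k) hk (by norm_num)

/-- Spectral truncation. -/
def trunc (N : ℝ) (c : Coef) : Coef := fun k => if lam k ≤ N then c k else 0

lemma finH_of_supp {N : ℝ} {c : Coef} (h : ∀ k, N < lam k → c k = 0) (σ : ℝ) : FinH σ c := by
  unfold FinH
  refine summable_of_hasFiniteSupport ((finite_lam N).subset fun k hk => ?_)
  by_contra hn
  simp only [mem_ofPred_eq, not_le] at hn
  simp [h k hn] at hk

lemma memHinf_of_supp {N : ℝ} {c : Coef} (h : ∀ k, N < lam k → c k = 0) (hr : IsReal c) : MemHinf c :=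
  fun σ => ⟨hr, finH_of_supp h σ⟩

lemma trunc_supp (N : ℝ) (c : Coef) : ∀ k, N < lam k → trunc N c k = 0 := fun k hk => by
  simp [trunc, not_le.2 hk]

lemma trunc_real (N : ℝ) {c : Coef} (h : IsReal c) : IsReal (trunc N c) := fun k => by
  simp only [trunc, lam_fneg]
  split_ifs
  · exact h k
  · simp

lemma memHinf_trunc (N : ℝ) {c : Coef} (h : IsReal c) : MemHinf (trunc N c) :=
  memHinf_of_supp (trunc_supp N c) (trunc_real N h)

lemma EE_trunc_le (σ N : ℝ) (c : Coef) : EE σ (trunc N c) ≤ EE σ c := by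
  refine ENNReal.tsum_le_tsum fun k => ?_
  unfold trunc
  split_ifs <;> simp

lemma EE_le_of_trunc {σ : ℝ} {c : Coef} {B : ℝ≥0∞} (h : ∀ N : ℝ, EE σ (trunc N c) ≤ B) : EE σ c ≤ B := by
  unfold EE
  rw [ENNReal.tsum_eq_iSup_sum]
  refine iSup_le fun F => ?_
  refine le_trans ?_ (h (∑ k ∈ F, lam k))
  refine le_trans ?_ (ENNReal.sum_le_tsum F)
  refine le_of_eq (Finset.sum_congr rfl fun k hk => ?_)
  have : lam k ≤ ∑ k ∈ F, lam k := Finset.single_le_sum (fun i _ => (lam_pos i).le) hk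
  simp [trunc, this]

lemma tail_tendsto {σ : ℝ} {c : Coef} (h : FinH σ c) :
    Tendsto (fun N : ℕ => EE σ (c - trunc N c)) atTop (𝓝 0) := by
  have hf : ∀ N : ℕ, FinH σ (c - trunc N c) := fun N => finH_sub h (finH_of_supp (trunc_supp N c) σ)
  simp_rw [fun N => EE_eq_ofReal (hf N)]
  rw [← ENNReal.ofReal_zero]
  apply ENNReal.tendsto_ofReal
  have e : (0:ℝ) = ∑' k : Freq, (0:ℝ) := by simp
  rw [e]
  unfold hSq
  refine tendsto_tsum_of_dominated_convergence (bound := fun k => lam k ^ σ * ‖c k‖ ^ 2) h ?_ ?_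
  · intro k
    obtain ⟨n, hn⟩ := exists_nat_ge (lam k)
    refine tendsto_const_nhds.congr' ?_
    filter_upwards [eventually_ge_atTop n] with m hm
    have : lam k ≤ m := hn.trans (by exact_mod_cast hm)
    simp [trunc, this]
  · refine Eventually.of_forall fun N k => ?_
    rw [Real.norm_of_nonneg (term_nonneg σ _ k)]
    have := term_nonneg σ c k
    simp only [Pi.sub_apply, trunc]
    split_ifs
    · simpa using this
    · simp

/-- The remainder operator. -/
def KK (ν : ℝ) (M : Coef → Coef) (ξ : Coef) : Coef := fun k =>
  (((lam k)⁻¹ : ℝ) : ℂ) * ξ k - 2 * (ν : ℂ) * M ξ k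

def KB (ν : ℝ) (M : Coef → Coef) (s : ℝ) : Prop :=
  ∃ C : ℝ≥0∞, C ≠ ∞ ∧ ∀ ξ g, MemHinf ξ → MemHinf g →
      ‖(∑' k, (((lam k)⁻¹ : ℝ) : ℂ) * (ξ k * conj (g k))) -
        2 * (ν : ℂ) * innerC (M ξ) g‖ₑ ≤ C * (EE s ξ + EE (-s - 5 / 2) g)

structure Hyp (ν a : ℝ) (M : Coef → Coef) : Prop where
  lin : IsLinMap M
  map : ∀ ξ, MemH a ξ → MemH (a + 2) (M ξ)
  bdd : ∃ C : ℝ≥0∞, C ≠ ∞ ∧ ∀ ξ, MemH a ξ → EE (a + 2) (M ξ) ≤ C * EE a ξ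
  coer : ∃ C : ℝ≥0∞, C ≠ ∞ ∧ ∀ ξ, MemHinf ξ → EE (-1) ξ ≤ C * ‖innerC (M ξ) ξ‖ₑ
  kb1 : KB ν M (-1)
  kba : KB ν M a

lemma KK_real {ν : ℝ} {M : Coef → Coef} {ξ : Coef} (h1 : IsReal ξ) (h2 : IsReal (M ξ)) :
    IsReal (KK ν M ξ) := fun k => by
  simp only [KK, lam_fneg, h1 k, h2 k, map_sub, map_mul, Complex.conj_ofReal, map_ofNat]
  ring

lemma pair_finsupp {ν : ℝ} {M : Coef → Coef} {ξ g : Coef} {N : ℝ} (h : ∀ k, N < lam k → g k = 0) :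
    (∑' k, (((lam k)⁻¹ : ℝ) : ℂ) * (ξ k * conj (g k))) - 2 * (ν : ℂ) * innerC (M ξ) g =
      ∑' k, KK ν M ξ k * conj (g k) := by
  have fs : ∀ F : Freq → ℂ, (∀ k, N < lam k → F k = 0) → Summable F := fun F hF => by
    refine summable_of_hasFiniteSupport ((finite_lam N).subset fun k hk => ?_)
    by_contra hn
    simp only [mem_ofPred_eq, not_le] at hn
    exact hk (hF k hn)
  unfold innerC
  rw [← tsum_mul_left, ← Summable.tsum_sub (fs _ fun k hk => by simp [h k hk])
    (fs _ fun k hk => by simp [h k hk])]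
  exact tsum_congr fun k => by unfold KK; ring

lemma KK_bound {ν : ℝ} {M : Coef → Coef} {s : ℝ} (hb : KB ν M s)
    (hr : ∀ ξ, MemHinf ξ → IsReal (M ξ)) :
    ∃ C : ℝ≥0∞, C ≠ ∞ ∧ ∀ ξ, MemHinf ξ → EE (s + 5 / 2) (KK ν M ξ) ≤ C * EE s ξ := by
  obtain ⟨C, hC, hb⟩ := hb
  lift C to NNReal using hC
  set τ : ℝ := 1 / (2 * ((C:ℝ) + 1)) with hτ
  have hτ0 : 0 < τ := by positivity
  refine ⟨ENNReal.ofReal (2 * C / τ), by finiteness, fun ξ hξ => ?_⟩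
  apply EE_le_of_trunc
  intro N
  set c := trunc N (KK ν M ξ) with hc
  have hcs := trunc_supp N (KK ν M ξ)
  have hcr : IsReal c := trunc_real N (KK_real (hξ 0).1 (hr ξ hξ))
  set g : Coef := fun k => ((τ * lam k ^ (s + 5 / 2) : ℝ) : ℂ) * c k with hg
  have hgs : ∀ k, N < lam k → g k = 0 := fun k hk => by simp [hg, hc, hcs k hk]
  have hgr : IsReal g := fun k => by
    simp only [hg, lam_fneg, hcr k, map_mul, Complex.conj_ofReal]; ring
  have key := hb ξ g hξ (memHinf_of_supp hgs hgr)
  rw [pair_finsupp hgs] at key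
  have hcf : FinH (s + 5 / 2) c := finH_of_supp hcs _
  set X := hSq (s + 5 / 2) c with hX
  have hX0 : 0 ≤ X := hSq_nonneg _ _
  have e1 : ∑' k, KK ν M ξ k * conj (g k) = ((τ * X : ℝ) : ℂ) := by
    rw [hX, hSq, ← tsum_mul_left, Complex.ofReal_tsum]
    refine tsum_congr fun k => ?_
    by_cases hk : lam k ≤ N
    · have : KK ν M ξ k = c k := by simp [hc, trunc, hk]
      rw [this]
      simp only [hg, map_mul, Complex.conj_ofReal]
      have := Complex.mul_conj' (c k)
      push_cast
      linear_combination (τ:ℂ) * ((lam k ^ (s + 5/2) : ℝ) : ℂ) * this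
    · simp [hgs k (not_le.1 hk), hc, hcs k (not_le.1 hk)]
  have e2 : EE (-s - 5 / 2) g = ENNReal.ofReal (τ ^ 2 * X) := by
    rw [EE_eq_ofReal (finH_of_supp hgs _), hX, hSq, hSq, ← tsum_mul_left]
    congr 1
    refine tsum_congr fun k => ?_
    simp only [hg, norm_mul, Complex.norm_real]
    rw [Real.norm_of_nonneg hτ0.le, Real.norm_of_nonneg (Real.rpow_nonneg (lam_pos k).le _)]
    have : lam k ^ (-s - 5 / 2) * lam k ^ (s + 5 / 2) = 1 := by
      rw [← Real.rpow_add (lam_pos k)]; ring_nf; simp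
    linear_combination (τ ^ 2 * lam k ^ (s + 5 / 2) * ‖c k‖ ^ 2) * this
  have e3 : EE s ξ = ENNReal.ofReal (hSq s ξ) := EE_eq_ofReal (hξ s).2
  set E := hSq s ξ with hE
  have hE0 : 0 ≤ E := hSq_nonneg _ _
  rw [e1, e2, e3, ← ofReal_norm, Complex.norm_real, Real.norm_of_nonneg (by positivity),
    ← ENNReal.ofReal_add hE0 (by positivity), ← ENNReal.ofReal_coe_nnreal,
    ← ENNReal.ofReal_mul (by positivity), ENNReal.ofReal_le_ofReal_iff (by positivity)] at key
  rw [EE_eq_ofReal hcf, e3, ← ENNReal.ofReal_mul (by positivity)]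
  apply ENNReal.ofReal_le_ofReal
  have h1 : (C:ℝ) * τ ≤ 1 / 2 := by
    rw [hτ, mul_one_div, div_le_div_iff₀ (by positivity) (by positivity)]; linarith
  have h2 : (C:ℝ) * (τ ^ 2 * X) ≤ 1 / 2 * (τ * X) := by
    have := mul_le_mul_of_nonneg_right h1 (show 0 ≤ τ * X by positivity)
    nlinarith
  rw [div_mul_eq_mul_div, le_div_iff₀ hτ0]
  nlinarith

lemma absorb {x y : ℝ≥0∞} (hx : x ≠ ∞) (h : 2 * x ≤ y + x) : x ≤ y := by
  rw [two_mul] at h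
  exact (ENNReal.add_le_add_iff_right hx).1 h

lemma interp (a : ℝ) {ε : ℝ} (hε : 0 < ε) : ∃ C : ℝ≥0∞, C ≠ ∞ ∧ ∀ k,
    wt (a + 2) k ≤ ENNReal.ofReal ε * wt (a + 5 / 2) k + C * wt (3 / 2) k := by
  have hfin := finite_lam (ε⁻¹ ^ 2)
  refine ⟨∑ k ∈ hfin.toFinset, wt (a + 1 / 2) k, ?_, fun k => ?_⟩
  · exact (ENNReal.sum_lt_top.2 fun k _ => (wt_ne_top _ k).lt_top).ne
  · by_cases hk : lam k ≤ ε⁻¹ ^ 2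
    · refine le_trans ?_ le_add_self
      have : wt (a + 2) k = wt (a + 1 / 2) k * wt (3 / 2) k := by rw [wt_mul]; ring_nf
      rw [this]
      gcongr
      exact Finset.single_le_sum (f := fun k => wt (a + 1 / 2) k) (fun _ _ => zero_le) (by simpa using hk)
    · refine le_trans ?_ le_self_add
      unfold wt
      rw [← ENNReal.ofReal_mul hε.le]
      apply ENNReal.ofReal_le_ofReal
      have e : a + 5 / 2 = (a + 2) + 1 / 2 := by ring
      rw [e, Real.rpow_add (lam_pos k) (a + 2) (1 / 2), ← Real.sqrt_eq_rpow]
      have h1 : ε⁻¹ ≤ √(lam k) := Real.le_sqrt_of_sq_le (not_le.1 hk).le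
      have h2 : 1 ≤ ε * √(lam k) := by
        rw [inv_le_iff_one_le_mul₀ hε] at h1; linarith
      have h3 : 0 ≤ lam k ^ (a + 2) := Real.rpow_nonneg (lam_pos k).le _
      nlinarith

lemma Hyp.real {ν a : ℝ} {M : Coef → Coef} (h : Hyp ν a M) : ∀ ξ, MemHinf ξ → IsReal (M ξ) :=
  fun ξ hξ => (h.map ξ (hξ a)).1

lemma lemD {ν a : ℝ} {M : Coef → Coef} (ha : -1 ≤ a) (h : Hyp ν a M) :
    ∃ C : ℝ≥0∞, C ≠ ∞ ∧ ∀ ξ, MemHinf ξ → ∀ g : Coef, (∀ k, ξ k ≠ 0 → M ξ k = g k) →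
      EE a ξ ≤ C * EE (a + 2) g := by
  obtain ⟨Cc, hCc, hco⟩ := h.coer
  obtain ⟨C2, hC2, hk1⟩ := KK_bound h.kb1 h.real
  obtain ⟨C1, hC1, hka⟩ := KK_bound h.kba h.real
  lift C1 to NNReal using hC1
  set ε : ℝ := 1 / (4 * ((C1 : ℝ) + 1)) with hε
  obtain ⟨Ce, hCe, hIntg⟩ := interp a (ε := ε) (by positivity)
  refine ⟨2 * (2 * ENNReal.ofReal (4 * ν ^ 2) + 2 * (Ce * (C2 * Cc ^ 2))), by finiteness,
    fun ξ hξ g hg => ?_⟩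
  have fin1 : EE (-1) ξ ≠ ∞ := (finH_iff _ _).1 (hξ _).2
  have fina : EE a ξ ≠ ∞ := (finH_iff _ _).1 (hξ _).2
  have base : EE (-1) ξ ≤ Cc ^ 2 * EE (a + 2) g := by
    refine le_trans ?_ (mul_le_mul_right (EE_mono (show (1:ℝ) ≤ a + 2 by linarith) g) _)
    apply absorb fin1
    refine (mul_le_mul_right (hco ξ hξ) 2).trans ?_
    have e : innerC (M ξ) ξ = ∑' k, g k * conj (ξ k) := by
      refine tsum_congr fun k => ?_
      by_cases hk : ξ k = 0
      · simp [hk]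
      · rw [hg k hk]
    rw [e]
    refine (mul_le_mul_right (mul_le_mul_right enorm_tsum_le_tsum_enorm Cc) 2).trans ?_
    rw [EE, EE, ← ENNReal.tsum_mul_left, ← ENNReal.tsum_mul_left, ← ENNReal.tsum_mul_left, ← ENNReal.tsum_add]
    refine ENNReal.tsum_le_tsum fun k => ?_
    have := ennreal_two_mul_le (Cc * (wt (1 / 2) k * ‖g k‖ₑ)) (wt (-1 / 2) k * ‖ξ k‖ₑ)
    rw [mul_pow, mul_pow, mul_pow, wt_sq, wt_sq, mul_div_cancel₀ _ two_ne_zero, mul_div_cancel₀ _ two_ne_zero] at this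
    refine le_trans (le_of_eq ?_) this
    have w : wt (1 / 2) k * wt (-1 / 2) k = 1 := by rw [wt_mul, ← wt_zero k]; norm_num
    rw [enorm_mul, enorm_conj]
    calc 2 * (Cc * (‖g k‖ₑ * ‖ξ k‖ₑ)) = 2 * (Cc * (‖g k‖ₑ * ‖ξ k‖ₑ)) * 1 := (mul_one _).symm
      _ = _ := by rw [← w]; ring
  have i1 : EE a ξ ≤ 2 * (ENNReal.ofReal (4 * ν ^ 2) * EE (a + 2) g) + 2 * EE (a + 2) (KK ν M ξ) := by
    unfold EE
    rw [← ENNReal.tsum_mul_left, ← ENNReal.tsum_mul_left, ← ENNReal.tsum_mul_left, ← ENNReal.tsum_add]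
    refine ENNReal.tsum_le_tsum fun k => ?_
    by_cases hk : ξ k = 0
    · simp [hk]
    have e : wt a k * ‖ξ k‖ₑ ^ 2 = wt (a + 2) k * ‖2 * (ν:ℂ) * g k + KK ν M ξ k‖ₑ ^ 2 := by
      have : 2 * (ν:ℂ) * g k + KK ν M ξ k = (((lam k)⁻¹ : ℝ) : ℂ) * ξ k := by
        rw [KK, hg k hk]; ring
      rw [this, enorm_mul, wt_neg_one, mul_pow, wt_sq, ← mul_assoc, wt_mul]
      ring_nf
    rw [e]
    have n : ‖2 * (ν:ℂ) * g k‖ₑ ^ 2 = ENNReal.ofReal (4 * ν ^ 2) * ‖g k‖ₑ ^ 2 := by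
      rw [enorm_mul, mul_pow, ← ofReal_norm, ← ENNReal.ofReal_pow (norm_nonneg _)]
      congr 2
      simp [mul_pow]; norm_num
    calc _ ≤ wt (a + 2) k * (2 * ‖2 * (ν:ℂ) * g k‖ₑ ^ 2 + 2 * ‖KK ν M ξ k‖ₑ ^ 2) := by
          gcongr
          exact (pow_le_pow_left' (enorm_add_le _ _) 2).trans (ennreal_add_sq_le _ _)
      _ = _ := by rw [n]; ring
  have i2 : EE (a + 2) (KK ν M ξ) ≤ ENNReal.ofReal ε * (C1 * EE a ξ) +
      Ce * (C2 * (Cc ^ 2 * EE (a + 2) g)) := by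
    have j1 := hka ξ hξ
    have j2 := hk1 ξ hξ
    rw [show (-1 + 5 / 2 : ℝ) = 3 / 2 by norm_num] at j2
    calc EE (a + 2) (KK ν M ξ) ≤ ENNReal.ofReal ε * EE (a + 5 / 2) (KK ν M ξ) + Ce * EE (3 / 2) (KK ν M ξ) := by
          unfold EE
          rw [← ENNReal.tsum_mul_left, ← ENNReal.tsum_mul_left, ← ENNReal.tsum_add]
          refine ENNReal.tsum_le_tsum fun k => ?_
          calc _ ≤ (ENNReal.ofReal ε * wt (a + 5 / 2) k + Ce * wt (3 / 2) k) * ‖KK ν M ξ k‖ₑ ^ 2 := by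
                gcongr; exact hIntg k
            _ = _ := by ring
      _ ≤ _ := by gcongr; exact j2.trans (by gcongr)
  have hεC : 2 * (2 * (ENNReal.ofReal ε * C1)) ≤ 1 := by
    rw [← ENNReal.ofReal_coe_nnreal, ← ENNReal.ofReal_mul (by positivity), ← ENNReal.ofReal_ofNat 2,
      ← ENNReal.ofReal_mul (by positivity), ← ENNReal.ofReal_mul (by positivity), ENNReal.ofReal_le_one, hε]
    rw [one_div, inv_mul_eq_div, mul_div_assoc', mul_div_assoc', div_le_one (by positivity)]
    linarith
  apply absorb fina
  calc 2 * EE a ξ ≤ 2 * (2 * (ENNReal.ofReal (4 * ν ^ 2) * EE (a + 2) g) +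
        2 * (ENNReal.ofReal ε * (C1 * EE a ξ) + Ce * (C2 * (Cc ^ 2 * EE (a + 2) g)))) := by
        gcongr; exact i1.trans (by gcongr)
    _ = 2 * (2 * ENNReal.ofReal (4 * ν ^ 2) + 2 * (Ce * (C2 * Cc ^ 2))) * EE (a + 2) g +
        (2 * (2 * (ENNReal.ofReal ε * C1))) * EE a ξ := by ring
    _ ≤ 2 * (2 * ENNReal.ofReal (4 * ν ^ 2) + 2 * (Ce * (C2 * Cc ^ 2))) * EE (a + 2) g + 1 * EE a ξ := by
        gcongr
    _ = _ := by rw [one_mul]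

end NS2D

namespace NS2D
open scoped ENNReal ComplexConjugate Topology
open Filter

/-- Real fields with spectrum in `lam ≤ N`. -/
def VN (N : ℝ) : Submodule ℝ Coef where
  carrier := {c | IsReal c ∧ ∀ k, N < lam k → c k = 0}
  zero_mem' := ⟨fun k => by simp, fun k _ => rfl⟩
  add_mem' := by
    rintro c d ⟨h1, h2⟩ ⟨h3, h4⟩
    refine ⟨fun k => ?_, fun k hk => ?_⟩
    · simp only [Pi.add_apply, h1 k, h3 k, map_add]; ring
    · simp [h2 k hk, h4 k hk]
  smul_mem' := by
    rintro r c ⟨h1, h2⟩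
    refine ⟨fun k => ?_, fun k hk => ?_⟩
    · simp [h1 k]
    · simp [h2 k hk]

lemma VN_finite (N : ℝ) : Module.Finite ℝ (VN N) := by
  have : Finite {k : Freq | lam k ≤ N} := (finite_lam N).to_subtype
  let L : VN N →ₗ[ℝ] ({k : Freq | lam k ≤ N} → ℂ) :=
    { toFun := fun c k => c.1 k.1
      map_add' := fun c d => rfl
      map_smul' := fun r c => rfl }
  refine Module.Finite.of_injective L fun c d hcd => ?_
  ext k
  by_cases hk : lam k ≤ N
  · exact congrFun hcd ⟨k, hk⟩
  · rw [c.2.2 k (not_le.1 hk), d.2.2 k (not_le.1 hk)]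

lemma VN_inf {N : ℝ} (c : VN N) : MemHinf c.1 := memHinf_of_supp c.2.2 c.2.1

lemma galerkin {ν a : ℝ} {M : Coef → Coef} (ha : -1 ≤ a) (h : Hyp ν a M) (N : ℝ) {g : Coef}
    (hg : IsReal g) :
    ∃ ξ : Coef, MemHinf ξ ∧ (∀ k, N < lam k → ξ k = 0) ∧ ∀ k, lam k ≤ N → M ξ k = g k := by
  have := VN_finite N
  obtain ⟨C, hC, hD⟩ := lemD ha h
  let L : VN N →ₗ[ℝ] VN N :=
    { toFun := fun c => ⟨trunc N (M c.1), trunc_real N (h.real c.1 (VN_inf c)), trunc_supp N _⟩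
      map_add' := fun c d => by
        ext k
        simp only [Submodule.coe_add, h.lin.1, trunc, Pi.add_apply]
        split_ifs <;> simp
      map_smul' := fun r c => by
        ext k
        simp only [Submodule.coe_smul, h.lin.2, trunc, Pi.smul_apply, RingHom.id_apply]
        split_ifs <;> simp }
  have hinj : Function.Injective L := by
    rw [← LinearMap.ker_eq_bot, LinearMap.ker_eq_bot']
    intro c hc
    have h0 : ∀ k, c.1 k ≠ 0 → M c.1 k = (0 : Coef) k := by
      intro k hk
      have hl : lam k ≤ N := by
        by_contra hn
        exact hk (c.2.2 k (not_le.1 hn))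
      have : trunc N (M c.1) k = 0 := congrFun (congrArg Subtype.val hc) k
      simpa [trunc, hl] using this
    have h1 := hD c.1 (VN_inf c) 0 h0
    have h2 : EE (a + 2) 0 = 0 := by simp [EE]
    rw [h2, mul_zero] at h1
    exact Subtype.ext (EE_eq_zero (le_antisymm h1 zero_le))
  obtain ⟨ξ, hξ⟩ := (LinearMap.injective_iff_surjective.1 hinj) ⟨trunc N g, trunc_real N hg, trunc_supp N g⟩
  refine ⟨ξ.1, VN_inf ξ, ξ.2.2, fun k hk => ?_⟩
  have : trunc N (M ξ.1) k = trunc N g k := congrFun (congrArg Subtype.val hξ) k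
  simpa [trunc, hk] using this

lemma IsLinMap.sub {M : Coef → Coef} (h : IsLinMap M) (c d : Coef) : M (c - d) = M c - M d := by
  have : M c = M (c - d) + M d := by rw [← h.1, sub_add_cancel]
  rw [this, add_sub_cancel_right]

lemma memH_sub {σ : ℝ} {c d : Coef} (hc : MemH σ c) (hd : MemH σ d) : MemH σ (c - d) :=
  ⟨fun k => by simp only [Pi.sub_apply, hc.1 k, hd.1 k, map_sub]; ring, finH_sub hc.2 hd.2⟩

lemma EE_symm (σ : ℝ) (c d : Coef) : EE σ (c - d) = EE σ (d - c) := by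
  rw [← EE_neg, neg_sub]

lemma lower {ν a : ℝ} {M : Coef → Coef} (ha : -1 ≤ a) (h : Hyp ν a M) :
    ∃ C : ℝ≥0∞, C ≠ ∞ ∧ ∀ ξ, MemH a ξ → EE a ξ ≤ C * EE (a + 2) (M ξ) := by
  obtain ⟨C, hC, hD⟩ := lemD ha h
  obtain ⟨CM, hCM, hM⟩ := h.bdd
  refine ⟨2 * (C * 2), by finiteness, fun ξ hξ => ?_⟩
  have key : ∀ N : ℕ, EE a ξ ≤ 2 * (C * 2) * EE (a + 2) (M ξ) +
      (2 * (C * (2 * CM)) + 2) * EE a (ξ - trunc N ξ) := by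
    intro N
    set η := trunc N ξ with hη
    have hηi : MemHinf η := memHinf_trunc N hξ.1
    have e1 : EE a ξ ≤ 2 * EE a η + 2 * EE a (ξ - η) := by
      have := EE_add a η (ξ - η)
      rwa [add_sub_cancel] at this
    have e2 : EE a η ≤ C * EE (a + 2) (M η) := hD η hηi _ fun k _ => rfl
    have e3 : EE (a + 2) (M η) ≤ 2 * EE (a + 2) (M ξ) + 2 * (CM * EE a (ξ - η)) := by
      have := EE_sub (a + 2) (M ξ) (M (ξ - η))
      rw [h.lin.sub, sub_sub_cancel, ← h.lin.sub] at this
      refine this.trans ?_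
      gcongr
      exact hM _ (memH_sub hξ (hηi a))
    calc EE a ξ ≤ 2 * (C * (2 * EE (a + 2) (M ξ) + 2 * (CM * EE a (ξ - η)))) + 2 * EE a (ξ - η) :=
          e1.trans (by gcongr; exact e2.trans (by gcongr))
      _ = _ := by ring
  have ht := (ENNReal.Tendsto.const_mul (a := 2 * (C * (2 * CM)) + 2) (tail_tendsto hξ.2)
    (Or.inr (by finiteness))).const_add (2 * (C * 2) * EE (a + 2) (M ξ))
  rw [mul_zero, add_zero] at ht
  exact ge_of_tendsto' ht key

lemma galerkin_conv {ν a : ℝ} {M : Coef → Coef} (hν : 0 < ν) (ha : -1 ≤ a) (h : Hyp ν a M) {g : Coef}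
    (hg : MemH (a + 2) g) :
    ∃ X : ℕ → Coef, (∀ n, MemHinf (X n)) ∧ Tendsto (fun n => EE (a + 2) (M (X n) - g)) atTop (𝓝 0) := by
  obtain ⟨C, hC, hD⟩ := lemD ha h
  obtain ⟨C1, hC1, hka⟩ := KK_bound h.kba h.real
  choose X hX1 hX2 hX3 using fun n : ℕ => galerkin ha h (n : ℝ) hg.1
  refine ⟨X, hX1, ?_⟩
  have hgf : EE (a + 2) g ≠ ∞ := (finH_iff _ _).1 hg.2
  have hXb : ∀ n, EE a (X n) ≤ C * EE (a + 2) g := fun n => hD _ (hX1 n) _ fun k hk =>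
    hX3 n k (by by_contra hn; exact hk (hX2 n k (not_le.1 hn)))
  set D := ENNReal.ofReal ((2 * ν)⁻¹ ^ 2) with hDd
  set B := 2 * (D * (C1 * (C * EE (a + 2) g))) with hB
  have key : ∀ n : ℕ, 1 ≤ n → EE (a + 2) (M (X n) - g) ≤
      B * ENNReal.ofReal ((√(n:ℝ))⁻¹) + 2 * EE (a + 2) (g - trunc n g) := by
    intro n hn
    have hn0 : (0:ℝ) < n := by exact_mod_cast hn
    have step : EE (a + 2) (M (X n) - g) ≤ 2 * (D * (ENNReal.ofReal ((√(n:ℝ))⁻¹) *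
        EE (a + 5 / 2) (KK ν M (X n)))) + 2 * EE (a + 2) (g - trunc n g) := by
      unfold EE
      rw [← ENNReal.tsum_mul_left, ← ENNReal.tsum_mul_left, ← ENNReal.tsum_mul_left,
        ← ENNReal.tsum_mul_left, ← ENNReal.tsum_add]
      refine ENNReal.tsum_le_tsum fun k => ?_
      by_cases hk : lam k ≤ n
      · simp [hX3 n k hk]
      have hk := not_le.1 hk
      have e : (M (X n) - g) k = (-(((2 * ν)⁻¹ : ℝ) : ℂ)) * KK ν M (X n) k - g k := by
        have hν' : (ν : ℂ) ≠ 0 := by exact_mod_cast hν.ne'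
        simp only [Pi.sub_apply, KK, hX2 n k hk]
        push_cast
        field_simp
        ring
      have e2 : (g - trunc n g) k = g k := by simp [trunc, not_le.2 hk]
      have e3 : ‖(-(((2 * ν)⁻¹ : ℝ) : ℂ)) * KK ν M (X n) k‖ₑ ^ 2 = D * ‖KK ν M (X n) k‖ₑ ^ 2 := by
        rw [enorm_mul, mul_pow, enorm_neg, ← ofReal_norm (E := ℂ) (((2 * ν)⁻¹ : ℝ) : ℂ), Complex.norm_real,
          Real.norm_of_nonneg (by positivity), ← ENNReal.ofReal_pow (by positivity)]
      have e4 : wt (a + 2) k ≤ ENNReal.ofReal ((√(n:ℝ))⁻¹) * wt (a + 5 / 2) k := by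
        unfold wt
        rw [← ENNReal.ofReal_mul (by positivity)]
        apply ENNReal.ofReal_le_ofReal
        have e : a + 5 / 2 = (a + 2) + 1 / 2 := by ring
        rw [e, Real.rpow_add (lam_pos k) (a + 2) (1 / 2), ← Real.sqrt_eq_rpow]
        have h1 : √(n:ℝ) ≤ √(lam k) := Real.sqrt_le_sqrt hk.le
        have h0 : 0 < √(n:ℝ) := Real.sqrt_pos.2 hn0
        have h2 : 1 ≤ (√(n:ℝ))⁻¹ * √(lam k) := by
          rw [inv_mul_eq_div, le_div_iff₀ h0]; linarith
        have h3 : 0 ≤ lam k ^ (a + 2) := Real.rpow_nonneg (lam_pos k).le _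
        nlinarith
      rw [e, e2]
      calc _ ≤ wt (a + 2) k * (2 * ‖(-(((2 * ν)⁻¹ : ℝ) : ℂ)) * KK ν M (X n) k‖ₑ ^ 2 + 2 * ‖g k‖ₑ ^ 2) := by
            gcongr
            exact (pow_le_pow_left' enorm_sub_le 2).trans (ennreal_add_sq_le _ _)
        _ = 2 * (D * (wt (a + 2) k * ‖KK ν M (X n) k‖ₑ ^ 2)) + 2 * (wt (a + 2) k * ‖g k‖ₑ ^ 2) := by
            rw [e3]; ring
        _ ≤ 2 * (D * ((ENNReal.ofReal ((√(n:ℝ))⁻¹) * wt (a + 5 / 2) k) * ‖KK ν M (X n) k‖ₑ ^ 2)) +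
            2 * (wt (a + 2) k * ‖g k‖ₑ ^ 2) := by gcongr
        _ = _ := by ring
    refine step.trans (add_le_add ?_ le_rfl)
    calc _ ≤ 2 * (D * (ENNReal.ofReal ((√(n:ℝ))⁻¹) * (C1 * (C * EE (a + 2) g)))) := by
          gcongr; exact (hka _ (hX1 n)).trans (by gcongr; exact hXb n)
      _ = _ := by rw [hB]; ring
  have hBt : B ≠ ∞ := by finiteness
  have l1 : Tendsto (fun n : ℕ => ENNReal.ofReal ((√(n:ℝ))⁻¹)) atTop (𝓝 0) := by
    rw [← ENNReal.ofReal_zero]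
    apply ENNReal.tendsto_ofReal
    exact tendsto_inv_atTop_zero.comp (Real.tendsto_sqrt_atTop.comp tendsto_natCast_atTop_atTop)
  have l2 := (ENNReal.Tendsto.const_mul l1 (Or.inr hBt)).add
    (ENNReal.Tendsto.const_mul (tail_tendsto hg.2) (Or.inr (ENNReal.ofNat_ne_top (n := 2))))
  rw [mul_zero, mul_zero, add_zero] at l2
  refine tendsto_of_tendsto_of_tendsto_of_le_of_le' tendsto_const_nhds l2
    (Eventually.of_forall fun _ => zero_le) ?_
  filter_upwards [eventually_ge_atTop 1] with n hn using key n hn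

lemma complete {a : ℝ} {X : ℕ → Coef} (hX : ∀ n, MemH a (X n)) {ρ : ℕ → ℝ≥0∞}
    (hρ : Tendsto ρ atTop (𝓝 0)) (h : ∀ n m, EE a (X n - X m) ≤ ρ n + ρ m) :
    ∃ ξ, MemH a ξ ∧ Tendsto (fun n => EE a (ξ - X n)) atTop (𝓝 0) := by
  have hl : ∀ k, ∃ z, Tendsto (fun n => X n k) atTop (𝓝 z) := by
    intro k
    apply cauchySeq_tendsto_of_complete
    rw [EMetric.cauchySeq_iff]
    intro ε hε
    have hpos : 0 < wt a k * ε ^ 2 / 2 := by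
      have := wt_pos a k
      refine ENNReal.div_pos (mul_ne_zero this (pow_ne_zero _ hε.ne')) (by norm_num)
    obtain ⟨N, hN⟩ := (eventually_atTop).1 (hρ.eventually (gt_mem_nhds hpos))
    refine ⟨N, fun m hm n hn => ?_⟩
    have h1 := (mode_le_EE a (X m - X n) k).trans (h m n)
    have h2 : wt a k * ‖(X m - X n) k‖ₑ ^ 2 < wt a k * ε ^ 2 := by
      refine h1.trans_lt ?_
      calc _ < wt a k * ε ^ 2 / 2 + wt a k * ε ^ 2 / 2 := ENNReal.add_lt_add (hN m hm) (hN n hn)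
        _ = _ := ENNReal.add_halves _
    have h3 : ‖(X m - X n) k‖ₑ ^ 2 < ε ^ 2 := lt_of_mul_lt_mul_left' h2
    rw [edist_eq_enorm_sub]
    exact lt_of_pow_lt_pow_left' 2 h3
  choose ξ hξ using hl
  have hr : IsReal ξ := fun k => by
    have h1 := hξ (fneg k)
    have h2 : Tendsto (fun n => X n (fneg k)) atTop (𝓝 (- conj (ξ k))) := by
      simp_rw [fun n => (hX n).1 k]
      exact ((Complex.continuous_conj.tendsto _).comp (hξ k)).neg
    exact tendsto_nhds_unique h1 h2
  have hE : ∀ n, EE a (ξ - X n) ≤ ρ n := by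
    intro n
    unfold EE
    rw [ENNReal.tsum_eq_iSup_sum]
    refine iSup_le fun F => ?_
    have t1 : Tendsto (fun m => ∑ k ∈ F, wt a k * ‖(X m - X n) k‖ₑ ^ 2) atTop
        (𝓝 (∑ k ∈ F, wt a k * ‖(ξ - X n) k‖ₑ ^ 2)) := by
      refine tendsto_finsetSum _ fun k _ => ?_
      refine ENNReal.Tendsto.const_mul ?_ (Or.inr (wt_ne_top a k))
      exact ENNReal.Tendsto.pow (((hξ k).sub_const _).enorm)
    have t2 : Tendsto (fun m => ρ m + ρ n) atTop (𝓝 (ρ n)) := by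
      simpa using hρ.add_const (ρ n)
    refine le_of_tendsto_of_tendsto' t1 t2 fun m => ?_
    exact (ENNReal.sum_le_tsum F).trans (h m n)
  have hT : Tendsto (fun n => EE a (ξ - X n)) atTop (𝓝 0) :=
    tendsto_of_tendsto_of_tendsto_of_le_of_le tendsto_const_nhds hρ (fun _ => zero_le) hE
  refine ⟨ξ, ⟨hr, ?_⟩, hT⟩
  obtain ⟨n, hn⟩ := (hT.eventually (gt_mem_nhds (show (0:ℝ≥0∞) < 1 by norm_num))).exists
  have h1 : FinH a (ξ - X n) := (finH_iff _ _).2 (hn.trans (by norm_num)).ne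
  have h2 : FinH a (X n - (ξ - X n)) := finH_sub (hX n).2 h1
  rw [finH_iff] at h1 ⊢
  have h3 := (finH_iff _ _).1 (hX n).2
  have := EE_add a (ξ - X n) (X n)
  rw [sub_add_cancel] at this
  exact ne_top_of_le_ne_top (by finiteness) this

lemma surj {ν a : ℝ} {M : Coef → Coef} (hν : 0 < ν) (ha : -1 ≤ a) (h : Hyp ν a M) {g : Coef}
    (hg : MemH (a + 2) g) : ∃ ξ, MemH a ξ ∧ M ξ = g := by
  obtain ⟨X, hX, hlim⟩ := galerkin_conv hν ha h hg
  obtain ⟨C, hC, hlow⟩ := lower ha h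
  obtain ⟨CM, hCM, hM⟩ := h.bdd
  obtain ⟨ξ, hξ, hc⟩ := complete (fun n => hX n a)
    (ρ := fun n => C * 2 * EE (a + 2) (M (X n) - g))
    (by simpa using ENNReal.Tendsto.const_mul hlim (Or.inr (show C * 2 ≠ ∞ by finiteness)))
    (fun n m => by
      refine (hlow _ (memH_sub (hX n a) (hX m a))).trans ?_
      rw [h.lin.sub]
      have := EE_sub (a + 2) (M (X n) - g) (M (X m) - g)
      rw [sub_sub_sub_cancel_right] at this
      calc _ ≤ C * _ := mul_le_mul_right this C
        _ = _ := by ring)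
  refine ⟨ξ, hξ, ?_⟩
  have key : ∀ n, EE (a + 2) (M ξ - g) ≤ 2 * CM * EE a (ξ - X n) + 2 * EE (a + 2) (M (X n) - g) := by
    intro n
    have := EE_add (a + 2) (M ξ - M (X n)) (M (X n) - g)
    rw [sub_add_sub_cancel, ← h.lin.sub] at this
    refine this.trans ?_
    rw [mul_assoc]
    gcongr
    exact hM _ (memH_sub hξ (hX n a))
  have t := (ENNReal.Tendsto.const_mul hc (Or.inr (show 2 * CM ≠ ∞ by finiteness))).add
    (ENNReal.Tendsto.const_mul hlim (Or.inr (ENNReal.ofNat_ne_top (n := 2))))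
  rw [mul_zero, mul_zero, add_zero] at t
  have h0 : EE (a + 2) (M ξ - g) ≤ 0 := ge_of_tendsto' t key
  exact sub_eq_zero.1 (EE_eq_zero (le_antisymm h0 zero_le))

lemma conclude {ν a : ℝ} {M : Coef → Coef} (hν : 0 < ν) (ha : -1 ≤ a) (h : Hyp ν a M) :
    (∀ ξ ξ' : Coef, MemH a ξ → MemH a ξ' → M ξ = M ξ' → ξ = ξ') ∧
    (∀ g : Coef, MemH (a + 2) g → ∃ ξ, MemH a ξ ∧ M ξ = g) ∧
    (∃ c : ℝ, 0 < c ∧ ∀ ξ, MemH a ξ → c * hN a ξ ≤ hN (a + 2) (M ξ)) := by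
  obtain ⟨C, hC, hlow⟩ := lower ha h
  refine ⟨fun ξ ξ' h1 h2 e => ?_, fun g hg => surj hν ha h hg, ?_⟩
  · have := hlow _ (memH_sub h1 h2)
    rw [h.lin.sub, e, sub_self] at this
    have h0 : EE (a + 2) 0 = 0 := by simp [EE]
    rw [h0, mul_zero] at this
    exact sub_eq_zero.1 (EE_eq_zero (le_antisymm this zero_le))
  · lift C to NNReal using hC
    refine ⟨(√((C:ℝ) + 1))⁻¹, by positivity, fun ξ hξ => ?_⟩
    have key := hlow ξ hξ
    rw [EE_eq_hN hξ.2, EE_eq_hN (h.map ξ hξ).2, ← ENNReal.ofReal_coe_nnreal,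
      ← ENNReal.ofReal_mul (by positivity), ENNReal.ofReal_le_ofReal_iff (by positivity)] at key
    have n1 : 0 ≤ hN a ξ := Real.sqrt_nonneg _
    have n2 : 0 ≤ hN (a + 2) (M ξ) := Real.sqrt_nonneg _
    have hs : 0 < √((C:ℝ) + 1) := by positivity
    rw [inv_mul_le_iff₀ hs]
    refine abs_le_of_sq_le_sq' ?_ (by positivity) |>.2
    rw [mul_pow, Real.sq_sqrt (by positivity)]
    nlinarith [sq_nonneg (hN (a + 2) (M ξ))]

end NS2D

namespace NS2D
open scoped ENNReal ComplexConjugate Topology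
open Filter

lemma innerC_self (c : Coef) : innerC c c = ((hSq 0 c : ℝ) : ℂ) := by
  unfold innerC hSq
  rw [Complex.ofReal_tsum]
  refine tsum_congr fun k => ?_
  rw [Complex.mul_conj']; simp

lemma Lin.inner_self {ν T R : ℝ} {C0 : ℝ≥0∞} {ξ : Coef} {W N : ℝ → Coef} (h : Lin ν T R C0 ξ W N)
    (hf : ∀ t ∈ Ioc 0 T, FinH 0 (W t)) :
    ‖∫ t in Ioc 0 T, innerC (W t) (W t)‖ₑ = ∫⁻ t in Ioc 0 T, EE 0 (W t) := by
  have hm : AEMeasurable (fun t => EE 0 (W t)) (volume.restrict (Ioc 0 T)) := by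
    unfold EE
    exact AEMeasurable.ennreal_tsum fun k =>
      ((h.par.measW k le_rfl le_rfl).enorm.pow_const 2).const_mul _
  have e : ∫ t in Ioc 0 T, innerC (W t) (W t) = ∫ t in Ioc 0 T, (((EE 0 (W t)).toReal : ℝ) : ℂ) := by
    refine setIntegral_congr_fun measurableSet_Ioc fun t ht => ?_
    rw [innerC_self, EE_eq_ofReal (hf t ht), ENNReal.toReal_ofReal (hSq_nonneg _ _)]
  rw [e, integral_complex_ofReal, integral_toReal hm, ← ofReal_norm, Complex.norm_real,
    Real.norm_of_nonneg ENNReal.toReal_nonneg, ENNReal.ofReal_toReal h.fin0]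
  filter_upwards [ae_restrict_mem measurableSet_Ioc] with t ht
  exact ((finH_iff _ _).1 (hf t ht)).lt_top

lemma mk_hyp (a : ℤ) (ha : -1 ≤ a) (T ν : ℝ) (hT : 0 < T) (hν : 0 < ν)
    (θ f : Coef)
    (hθ : MemH ((a : ℝ) + 4) θ)
    (hf : MemH ((a : ℝ) + 4 - 1) f)
    (uθ : ℝ → Coef) (huθ : IsNSSol ν f T θ uθ)
    (I : Coef → ℝ → Coef)
    (hI : ∀ ξ, MemHinf ξ →
      IsLinSol ν uθ T ξ (I ξ) ∧ ContH 0 T (I ξ) ∧ MemL2H 1 T (I ξ))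
    (M : Coef → Coef) (hMlin : IsLinMap M)
    (hMmap : ∀ ξ, MemH (a : ℝ) ξ → MemH ((a : ℝ) + 2) (M ξ))
    (hMbdd : ∃ C : ℝ, 0 < C ∧ ∀ ξ, MemH (a : ℝ) ξ →
      hN ((a : ℝ) + 2) (M ξ) ≤ C * hN (a : ℝ) ξ)
    (hMrep : ∀ ξ g, MemHinf ξ → MemHinf g →
      innerC (M ξ) g = ∫ t in (0:ℝ)..T, innerC (I ξ t) (I g t)) : Hyp ν a M := by
  have haR : (-1:ℝ) ≤ a := by exact_mod_cast ha
  obtain ⟨K, hK, hu⟩ := u_L1 hν hT ha hθ hf huθ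
  set R : ℝ := (a:ℝ) + 5 / 2 with hR
  have hC0 : 4 * K ≠ ∞ := by finiteness
  have hL := fun ξ hξ => lin_of (R := R) hu hξ (hI ξ hξ)
  have hrep : ∀ ξ g, MemHinf ξ → MemHinf g → innerC (M ξ) g = ∫ t in Ioc 0 T, innerC (I ξ t) (I g t) :=
    fun ξ g h1 h2 => by rw [hMrep ξ g h1 h2, intervalIntegral.integral_of_le hT.le]
  have kb : ∀ n : ℕ, (n : ℝ) - 1 ≤ a → KB ν M ((n:ℝ) - 1) := by
    intro n hn
    have hn0 : (0:ℝ) ≤ n := n.cast_nonneg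
    have c1 : Ctl ν T R (4 * K) ((n:ℝ) - 1) := ctl_nat hν hT hC0 (by linarith) n (by linarith)
    have c2 : Ctl ν T R (4 * K) (-((n:ℝ) - 1) - 5 / 2) :=
      ctl_low hν hT hC0 (by rw [abs_le]; constructor <;> linarith) (by linarith)
    obtain ⟨C, hC, hb⟩ := kbound hν hT hC0 rfl (by rw [abs_le]; constructor <;> linarith)
      (by rw [abs_le]; constructor <;> linarith) c1 c2
    refine ⟨C, hC, fun ξ g h1 h2 => ?_⟩
    rw [hrep ξ g h1 h2]
    exact hb _ _ _ _ _ _ (hL ξ h1) (hL g h2)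
  refine ⟨hMlin, hMmap, ?_, ?_, ?_, ?_⟩
  · obtain ⟨C, hC, hb⟩ := hMbdd
    refine ⟨ENNReal.ofReal (C ^ 2), by finiteness, fun ξ hξ => ?_⟩
    rw [EE_eq_hN hξ.2, EE_eq_hN (hMmap ξ hξ).2, ← ENNReal.ofReal_mul (by positivity)]
    apply ENNReal.ofReal_le_ofReal
    have n2 : 0 ≤ hN ((a:ℝ) + 2) (M ξ) := Real.sqrt_nonneg _
    rw [← mul_pow]
    exact pow_le_pow_left₀ n2 (hb ξ hξ) 2
  · obtain ⟨C, hC, hb⟩ := lin_coer (R := R) hν hT hC0 (by linarith)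
    refine ⟨C, hC, fun ξ hξ => ?_⟩
    rw [hrep ξ ξ hξ hξ, (hL ξ hξ).inner_self fun t ht => finH_mono (by norm_num) ((hI ξ hξ).2.2.1 t ht).2]
    exact hb _ _ _ (hL ξ hξ)
  · have := kb 0 (by simpa using haR)
    simpa using this
  · obtain ⟨n, hn⟩ := Int.eq_ofNat_of_zero_le (show 0 ≤ a + 1 by linarith)
    have e : (a : ℝ) = (n:ℝ) - 1 := by
      have : ((a + 1 : ℤ) : ℝ) = ((n : ℤ) : ℝ) := by rw [hn]
      push_cast at this
      linarith
    have := kb n e.ge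
    rwa [← e] at this

end NS2D

namespace NS2D

/-- Theorem `TheorInverseI`. Invertibility of the
information operator: for `a ∈ ℤ`, `a ≥ −1`, `b = max{a+4, |a|+1}`,
`θ ∈ Ḣ^b_⋄` and `f ∈ Ḣ^{b−1}_⋄`, the (extension of the) information operator
`M = 𝕀_θ*𝕀_θ` — a bounded linear operator `Ḣ^a_⋄ → Ḣ^{a+2}_⋄` characterised
on test fields by `⟨Mξ, g⟩_{L²} = ∫₀ᵀ ⟨𝕀_θ ξ(t), 𝕀_θ g(t)⟩_{L²} dt` — is a
homeomorphism between `Ḣ^a_⋄` and `Ḣ^{a+2}_⋄`: it is injective, surjective,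
and has a continuous inverse (equivalently, `Δ𝕀_θ*𝕀_θ` is a homeomorphism of
`Ḣ^a_⋄`). -/
theorem statement18 (a : ℤ) (ha : -1 ≤ a) (T ν : ℝ) (hT : 0 < T) (hν : 0 < ν)
    (θ f : Coef)
    (hθ : MemH ((max (a + 4) (|a| + 1) : ℤ) : ℝ) θ)
    (hf : MemH (((max (a + 4) (|a| + 1) : ℤ) : ℝ) - 1) f)
    (uθ : ℝ → Coef) (huθ : IsNSSol ν f T θ uθ)
    (I : Coef → ℝ → Coef)
    (hI : ∀ ξ, MemHinf ξ →
      IsLinSol ν uθ T ξ (I ξ) ∧ ContH 0 T (I ξ) ∧ MemL2H 1 T (I ξ))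
    (M : Coef → Coef) (hMlin : IsLinMap M)
    (hMmap : ∀ ξ, MemH (a : ℝ) ξ → MemH ((a : ℝ) + 2) (M ξ))
    (hMbdd : ∃ C : ℝ, 0 < C ∧ ∀ ξ, MemH (a : ℝ) ξ →
      hN ((a : ℝ) + 2) (M ξ) ≤ C * hN (a : ℝ) ξ)
    (hMrep : ∀ ξ g, MemHinf ξ → MemHinf g →
      innerC (M ξ) g = ∫ t in (0:ℝ)..T, innerC (I ξ t) (I g t)) :
    (∀ ξ ξ' : Coef, MemH (a : ℝ) ξ → MemH (a : ℝ) ξ' → M ξ = M ξ' → ξ = ξ') ∧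
    (∀ g : Coef, MemH ((a : ℝ) + 2) g → ∃ ξ, MemH (a : ℝ) ξ ∧ M ξ = g) ∧
    (∃ c : ℝ, 0 < c ∧ ∀ ξ, MemH (a : ℝ) ξ →
      c * hN (a : ℝ) ξ ≤ hN ((a : ℝ) + 2) (M ξ)) := by
  have hb : max (a + 4) (|a| + 1) = a + 4 := by
    apply max_eq_left
    rcases abs_cases a with ⟨h, _⟩ | ⟨h, _⟩ <;> omega
  rw [hb] at hθ hf
  push_cast at hθ hf
  have haR : (-1:ℝ) ≤ a := by exact_mod_cast ha
  exact conclude hν haR (mk_hyp a ha T ν hT hν θ f hθ hf uθ huθ I hI M hMlin hMmap hMbdd hMrep)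

end NS2D
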